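/- arXiv:2307.02941 — 3 statements merged into one kernel-verified Lean document; each statement's English description precedes it below -/
import Mathlib

section
/- (Key second-order inequality, noisy case.) Suppose all Z_i = I_r, so the cost matrix is L̂ = L ⊗ I_r − Δ. Let Y be a second-order critical point of the rank-p problem, set R = (1/n) Σ_{i=1}^n Y_i and W_i = Y_i − R, and let W ∈ ℝ^{rn×p} be the stack of the blocks W_i. Then (p − r − 2) Σ_{i,j=1}^n L_ij tr(Y_i Y_jᵀ) + (1/4) Σ_{i,j=1}^n A_ij ‖W_i − W_j‖_F⁴ ≤ 2(p + r − 2) ‖Δ‖ √(rn) ‖W‖_F, where ‖Δ‖ is the ℓ₂→ℓ₂ operator norm and ‖·‖_F the Frobenius norm. -/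
open Matrix MeasureTheory ProbabilityTheory
open scoped Kronecker BigOperators

namespace SyncPaper

variable {α : Type*}

/-- The `i`-th `r × p` row-block of a block matrix `Y ∈ α^{rn × p}`. -/
def blk {n r p : ℕ} (Y : Matrix (Fin n × Fin r) (Fin p) α) (i : Fin n) :
    Matrix (Fin r) (Fin p) α :=
  Matrix.of fun a b => Y (i, a) b

/-- `Y` is feasible: every `r × p` row-block has orthonormal rows. -/
def Feasible {n r p : ℕ} (Y : Matrix (Fin n × Fin r) (Fin p) ℝ) : Prop :=
  ∀ i, blk Y i * (blk Y i)ᵀ = 1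

/-- Symmetric block-diagonal projection: keeps the symmetric part of each `r × r`
diagonal block and zeroes out all off-diagonal blocks. -/
noncomputable def SBD {n r : ℕ} (M : Matrix (Fin n × Fin r) (Fin n × Fin r) ℝ) :
    Matrix (Fin n × Fin r) (Fin n × Fin r) ℝ :=
  Matrix.of fun q q' => if q.1 = q'.1 then (M q q' + M q' q) / 2 else 0

/-- The matrix `S(Y) = L̂ − SBD(L̂ Y Yᵀ)`. -/
noncomputable def Smat {n r p : ℕ} (Lhat : Matrix (Fin n × Fin r) (Fin n × Fin r) ℝ)
    (Y : Matrix (Fin n × Fin r) (Fin p) ℝ) :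
    Matrix (Fin n × Fin r) (Fin n × Fin r) ℝ :=
  Lhat - SBD (Lhat * Y * Yᵀ)

/-- Second-order critical point of the rank-`p` problem `min ⟨L̂, Y Yᵀ⟩` over feasible `Y`. -/
def IsSecondOrderCritical {n r p : ℕ} (Lhat : Matrix (Fin n × Fin r) (Fin n × Fin r) ℝ)
    (Y : Matrix (Fin n × Fin r) (Fin p) ℝ) : Prop :=
  Feasible Y ∧ Smat Lhat Y * Y = 0 ∧
    ∀ Ydot : Matrix (Fin n × Fin r) (Fin p) ℝ,
      (∀ i, blk Ydot i * (blk Y i)ᵀ + blk Y i * (blk Ydot i)ᵀ = 0) →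
      0 ≤ (Smat Lhat Y * Ydot * Ydotᵀ).trace

/-- The stacked ground truth `Z ∈ ℝ^{rn × r}`. -/
def Zstack {n r : ℕ} (Zb : Fin n → Matrix (Fin r) (Fin r) ℝ) :
    Matrix (Fin n × Fin r) (Fin r) ℝ :=
  Matrix.of fun q b => Zb q.1 q.2 b

/-- The block-diagonal matrix `D` with diagonal blocks `Z_1, …, Z_n`. -/
def Dmat {n r : ℕ} (Zb : Fin n → Matrix (Fin r) (Fin r) ℝ) :
    Matrix (Fin n × Fin r) (Fin n × Fin r) ℝ :=
  Matrix.of fun q q' => if q.1 = q'.1 then Zb q.1 q.2 q'.2 else 0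

/-- `L_Z = D (L ⊗ I_r) Dᵀ`. -/
def LZmat {n r : ℕ} (L : Matrix (Fin n) (Fin n) ℝ) (Zb : Fin n → Matrix (Fin r) (Fin r) ℝ) :
    Matrix (Fin n × Fin r) (Fin n × Fin r) ℝ :=
  Dmat Zb * (L ⊗ₖ (1 : Matrix (Fin r) (Fin r) ℝ)) * (Dmat Zb)ᵀ

/-- The ℓ₂→ℓ₂ operator norm of a matrix. -/
noncomputable def opNorm {m m' : Type*} [Fintype m] [Fintype m'] [DecidableEq m']
    (M : Matrix m m' ℝ) : ℝ :=
  ‖(Matrix.toEuclideanLin (𝕜 := ℝ) (m := m) (n := m')).trans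
      LinearMap.toContinuousLinearMap M‖

/-- The second-smallest eigenvalue of a connected graph Laplacian, via the variational
(Courant–Fischer) characterization: the minimum of the quadratic form over unit vectors
orthogonal to the all-ones vector. -/
noncomputable def lam2 {n : ℕ} (L : Matrix (Fin n) (Fin n) ℝ) : ℝ :=
  sInf {t : ℝ | ∃ x : Fin n → ℝ, (∑ i, x i = 0) ∧ (∑ i, (x i) ^ 2 = 1) ∧ t = x ⬝ᵥ (L *ᵥ x)}

/-- Squared Frobenius norm of a real matrix. -/
def frobSq {m m' : Type*} [Fintype m] [Fintype m'] (M : Matrix m m' ℝ) : ℝ :=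
  ∑ i, ∑ j, (M i j) ^ 2

/-- The inner product `⟨A, B⟩ = tr(A Bᵀ)`. -/
def ip {m : Type*} [Fintype m] (A B : Matrix m m ℝ) : ℝ := (A * Bᵀ).trace

/-- Feasibility for the SDP relaxation. -/
def SDPFeasible {n r : ℕ} (X : Matrix (Fin n × Fin r) (Fin n × Fin r) ℝ) : Prop :=
  X.PosSemidef ∧ SBD X = 1

end SyncPaper

namespace SyncPaper

/-!
Average the second-order condition over the tangent directions `Ẏ_i = E - Y_i Eᵀ Y_i`, with `E`
running over the matrix units (equivalently, `E` Gaussian). The sum of `Ẏ Ẏᵀ` has blocks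
`(p - 2) I + tr(Y_i Y_jᵀ) Y_i Y_jᵀ`, and its diagonal blocks are `(p + r - 2) I`, so the `SBD` term
of `S(Y)` contributes a multiple of `⟨L̂, Y Yᵀ⟩`. Since `‖Y_i - Y_j‖² = 2 (r - tr(Y_i Y_jᵀ))`, the
part coming from the Laplacian is exactly minus the left-hand side of the inequality.

With `Z = (I, …, I)`, the part coming from `Δ` is `p - 2` times `⟨Δ, Y Yᵀ - Z Zᵀ⟩` plus the inner
product of the `n × n` matrix `⟨Δ_ij, Y_i Y_jᵀ⟩`, whose operator norm is at most `r ‖Δ‖`, with the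
matrix `r - tr(Y_i Y_jᵀ)`. For `W = Y - Z R` and `U = Z - Y Rᵀ`,
`2 (Y Yᵀ - Z Zᵀ) = (W Yᵀ + Y Wᵀ) - (U Zᵀ + Z Uᵀ)`, and `‖U‖ ≤ ‖W‖` because `U_i = Y_i W_iᵀ`, where
`Y_i` has orthonormal rows; this bounds the first inner product. The second one is the same
estimate for the `n × rp` matrix whose rows are the vectorized blocks.
-/

section Frobenius

variable {m k l : Type*} [Fintype m] [Fintype k] [Fintype l]

lemma frobSq_eq_trace (A : Matrix m k ℝ) : frobSq A = (A * Aᵀ).trace := by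
  simp only [frobSq, trace, diag_apply, mul_apply, transpose_apply, sq]

lemma frobSq_nonneg (A : Matrix m k ℝ) : 0 ≤ frobSq A :=
  Finset.sum_nonneg fun _ _ => Finset.sum_nonneg fun _ _ => sq_nonneg _

lemma trace_mul_transpose (A B : Matrix m k ℝ) :
    (A * Bᵀ).trace = ∑ i, ∑ j, A i j * B i j := by
  simp only [← sum_hadamard_eq, hadamard_apply]

lemma frobSq_mul_transpose_le [DecidableEq m] {A : Matrix m k ℝ} (hA : A * Aᵀ = 1)
    (B : Matrix l k ℝ) : frobSq (A * Bᵀ) ≤ frobSq B := by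
  have hproj : (B - B * Aᵀ * A) * (B - B * Aᵀ * A)ᵀ = B * Bᵀ - B * Aᵀ * (A * Bᵀ) := by
    have : B * Aᵀ * A * (Aᵀ * (A * Bᵀ)) = B * Aᵀ * (A * Aᵀ) * (A * Bᵀ) := by
      simp only [Matrix.mul_assoc]
    simp only [transpose_sub, transpose_mul, transpose_transpose, Matrix.sub_mul, Matrix.mul_sub,
      this, hA, Matrix.mul_one]
    simp only [Matrix.mul_assoc, sub_self, sub_zero]
  have htrace : frobSq (A * Bᵀ) = (B * Aᵀ * (A * Bᵀ)).trace := by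
    rw [frobSq_eq_trace, trace_mul_comm, transpose_mul, transpose_transpose]
  have hres := frobSq_nonneg (B - B * Aᵀ * A)
  rw [frobSq_eq_trace, hproj, trace_sub] at hres
  linarith [frobSq_eq_trace B]

lemma ip_eq_sum (A B : Matrix m m ℝ) : ip A B = ∑ i, ∑ j, A i j * B i j :=
  trace_mul_transpose A B

lemma ip_sub_left (A B C : Matrix m m ℝ) : ip (A - B) C = ip A C - ip B C := by
  simp only [ip, Matrix.sub_mul, trace_sub]

lemma ip_add_right (A B C : Matrix m m ℝ) : ip A (B + C) = ip A B + ip A C := by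
  simp only [ip, transpose_add, Matrix.mul_add, trace_add]

lemma ip_sub_right (A B C : Matrix m m ℝ) : ip A (B - C) = ip A B - ip A C := by
  simp only [ip, transpose_sub, Matrix.mul_sub, trace_sub]

lemma ip_smul_right (c : ℝ) (A B : Matrix m m ℝ) : ip A (c • B) = c * ip A B := by
  simp only [ip, transpose_smul, Matrix.mul_smul, trace_smul, smul_eq_mul]

lemma ip_mul_transpose (D : Matrix m m ℝ) (A B : Matrix m k ℝ) :
    ip D (A * Bᵀ) = ∑ c, A.col c ⬝ᵥ D *ᵥ B.col c := by
  rw [ip, transpose_mul, transpose_transpose, ← Matrix.mul_assoc, trace_mul_comm]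
  simp only [trace, diag_apply, mul_apply, dotProduct, mulVec, col_apply, transpose_apply]

end Frobenius

section OperatorNorm

variable {m k l : Type*} [Fintype m] [Fintype k] [Fintype l] [DecidableEq m]

lemma opNorm_nonneg (D : Matrix k m ℝ) : 0 ≤ opNorm D := norm_nonneg _

lemma abs_dotProduct_mulVec_le (D : Matrix k m ℝ) (x : k → ℝ) (y : m → ℝ) :
    |x ⬝ᵥ D *ᵥ y| ≤ opNorm D * (√(∑ i, x i ^ 2) * √(∑ i, y i ^ 2)) := by
  have hx : ‖WithLp.toLp 2 x‖ = √(∑ i, x i ^ 2) := by simp [EuclideanSpace.norm_eq]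
  have hy : ‖WithLp.toLp 2 y‖ = √(∑ i, y i ^ 2) := by simp [EuclideanSpace.norm_eq]
  have hinner : inner ℝ (WithLp.toLp 2 x) (toEuclideanLin D (WithLp.toLp 2 y)) = x ⬝ᵥ D *ᵥ y := by
    simp [PiLp.inner_apply, dotProduct, mul_comm, Matrix.toLpLin_apply]
  have hD : ‖toEuclideanLin D (WithLp.toLp 2 y)‖ ≤ opNorm D * √(∑ i, y i ^ 2) :=
    hy ▸ (LinearMap.toContinuousLinearMap (toEuclideanLin D)).le_opNorm (WithLp.toLp 2 y)
  calc |x ⬝ᵥ D *ᵥ y|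
      ≤ √(∑ i, x i ^ 2) * ‖toEuclideanLin D (WithLp.toLp 2 y)‖ := by
        rw [← hinner, ← hx]; exact abs_real_inner_le_norm _ _
    _ ≤ √(∑ i, x i ^ 2) * (opNorm D * √(∑ i, y i ^ 2)) := by gcongr
    _ = opNorm D * (√(∑ i, x i ^ 2) * √(∑ i, y i ^ 2)) := by ring

lemma opNorm_le_of_dotProduct_mulVec_le {D : Matrix k m ℝ} {C : ℝ} (hC : 0 ≤ C)
    (h : ∀ x y, x ⬝ᵥ D *ᵥ y ≤ C * (√(∑ i, x i ^ 2) * √(∑ i, y i ^ 2))) : opNorm D ≤ C := by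
  refine ContinuousLinearMap.opNorm_le_of_re_inner_le hC fun y x hy hx => ?_
  have hinner : inner ℝ (toEuclideanLin D y) x = x.ofLp ⬝ᵥ D *ᵥ y.ofLp := by
    simp [PiLp.inner_apply, dotProduct, Matrix.toLpLin_apply]
  have hnorm : √(∑ i, x i ^ 2) * √(∑ i, y i ^ 2) = 1 := by
    simpa [EuclideanSpace.norm_eq] using congrArg₂ (· * ·) hx hy
  calc RCLike.re (inner ℝ (toEuclideanLin D y) x) = x.ofLp ⬝ᵥ D *ᵥ y.ofLp := hinner
    _ ≤ C := by simpa [hnorm] using h x y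

lemma abs_ip_mul_transpose_le (D : Matrix m m ℝ) (A B : Matrix m k ℝ) :
    |ip D (A * Bᵀ)| ≤ opNorm D * (√(frobSq A) * √(frobSq B)) := by
  have hcols (C : Matrix m k ℝ) : frobSq C = ∑ c, ∑ i, C.col c i ^ 2 := Finset.sum_comm
  calc |ip D (A * Bᵀ)|
      ≤ ∑ c, |A.col c ⬝ᵥ D *ᵥ B.col c| := ip_mul_transpose D A B ▸ Finset.abs_sum_le_sum_abs _ _
    _ ≤ ∑ c, opNorm D * (√(∑ i, A.col c i ^ 2) * √(∑ i, B.col c i ^ 2)) :=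
        Finset.sum_le_sum fun c _ => abs_dotProduct_mulVec_le D _ _
    _ ≤ opNorm D * (√(frobSq A) * √(frobSq B)) := by
        rw [← Finset.mul_sum, hcols, hcols]
        exact mul_le_mul_of_nonneg_left (Real.sum_sqrt_mul_sqrt_le _
          (fun _ => Finset.sum_nonneg fun _ _ => sq_nonneg _)
          fun _ => Finset.sum_nonneg fun _ _ => sq_nonneg _) (opNorm_nonneg D)

lemma abs_ip_mul_transpose_sub_le (D : Matrix m m ℝ) (Y : Matrix m k ℝ) (Z : Matrix m l ℝ)
    (R : Matrix l k ℝ) :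
    |ip D (Y * Yᵀ - Z * Zᵀ)| ≤
      opNorm D * (√(frobSq (Y - Z * R)) * √(frobSq Y) + √(frobSq (Z - Y * Rᵀ)) * √(frobSq Z)) := by
  have hsplit : (2 : ℝ) • (Y * Yᵀ - Z * Zᵀ) = (Y - Z * R) * Yᵀ + Y * (Y - Z * R)ᵀ -
      ((Z - Y * Rᵀ) * Zᵀ + Z * (Z - Y * Rᵀ)ᵀ) := by
    simp only [transpose_sub, transpose_mul, transpose_transpose, Matrix.sub_mul, Matrix.mul_sub,
      Matrix.mul_assoc, two_smul]
    abel
  have hip := congrArg (ip D) hsplit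
  rw [ip_smul_right, ip_sub_right D (_ + _), ip_add_right, ip_add_right] at hip
  have hWY := abs_le.1 (abs_ip_mul_transpose_le D (Y - Z * R) Y)
  have hYW := abs_le.1 (abs_ip_mul_transpose_le D Y (Y - Z * R))
  have hUZ := abs_le.1 (abs_ip_mul_transpose_le D (Z - Y * Rᵀ) Z)
  have hZU := abs_le.1 (abs_ip_mul_transpose_le D Z (Z - Y * Rᵀ))
  exact abs_le.2 ⟨by linarith, by linarith⟩

end OperatorNorm

section MatrixUnits

variable {m k S : Type*} [Fintype m] [Fintype k] [DecidableEq m] [DecidableEq k] [Semiring S]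

lemma sum_single_mul_single_transpose :
    ∑ a : m, ∑ b : k, single a b (1 : S) * (single a b (1 : S))ᵀ =
      (Fintype.card k : S) • (1 : Matrix m m S) := by
  simp only [transpose_single, single_mul_single_same, mul_one, Finset.sum_const,
    Finset.card_univ, ← Finset.smul_sum, sum_single_one, Nat.cast_smul_eq_nsmul]

lemma sum_single_mul_mul_single (M : Matrix k m S) :
    ∑ a : m, ∑ b : k, single a b (1 : S) * M * single a b (1 : S) = Mᵀ := by
  simp only [single_mul_mul_single, one_mul, mul_one]
  exact (matrix_eq_sum_single Mᵀ).symm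

lemma sum_single_transpose_mul_mul_single (M : Matrix m m S) :
    ∑ a : m, ∑ b : k, (single a b (1 : S))ᵀ * M * single a b (1 : S) = M.trace • 1 := by
  simp only [transpose_single, single_mul_mul_single, one_mul, mul_one]
  rw [Finset.sum_comm]
  simp only [trace, diag_apply, Finset.sum_smul, ← sum_single_one, Finset.smul_sum,
    smul_single, smul_eq_mul, mul_one]

end MatrixUnits

section Stiefel

variable {m k S : Type*} [Fintype m] [Fintype k] [CommRing S]

/-- The direction `E - X Eᵀ X`; it is tangent to the Stiefel manifold `{X | X Xᵀ = 1}` at each of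
its points `X`, and the second-order condition is averaged over these directions. -/
def stiefelTangent (X E : Matrix m k S) : Matrix m k S := E - X * Eᵀ * X

lemma stiefelTangent_mul_transpose_add [DecidableEq m] {X : Matrix m k S} (hX : X * Xᵀ = 1)
    (E : Matrix m k S) : stiefelTangent X E * Xᵀ + X * (stiefelTangent X E)ᵀ = 0 := by
  have hcancel_right : X * Eᵀ * X * Xᵀ = X * Eᵀ := by rw [Matrix.mul_assoc _ X, hX, Matrix.mul_one]
  have hcancel_left : X * (Xᵀ * (E * Xᵀ)) = E * Xᵀ := by rw [← Matrix.mul_assoc, hX, Matrix.one_mul]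
  simp only [stiefelTangent, transpose_sub, transpose_mul, transpose_transpose, Matrix.sub_mul,
    Matrix.mul_sub, hcancel_right, hcancel_left]
  abel

lemma sum_stiefelTangent_single_mul_transpose [DecidableEq m] [DecidableEq k]
    {X X' : Matrix m k S} (hX : X * Xᵀ = 1) (hX' : X' * X'ᵀ = 1) :
    ∑ a, ∑ b, stiefelTangent X (single a b 1) * (stiefelTangent X' (single a b 1))ᵀ =
      ((Fintype.card k : S) - 2) • 1 + (X * X'ᵀ).trace • (X * X'ᵀ) := by
  have hexpand (E : Matrix m k S) : stiefelTangent X E * (stiefelTangent X' E)ᵀ =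
      E * Eᵀ - E * X'ᵀ * E * X'ᵀ - X * (E * Xᵀ * E)ᵀ + X * (Eᵀ * (X * X'ᵀ) * E) * X'ᵀ := by
    simp only [stiefelTangent, transpose_sub, transpose_mul, transpose_transpose, Matrix.sub_mul,
      Matrix.mul_sub, Matrix.mul_assoc]
    abel
  simp only [hexpand, Finset.sum_add_distrib, Finset.sum_sub_distrib, ← Matrix.mul_sum,
    ← Matrix.sum_mul, ← transpose_sum, sum_single_mul_single_transpose,
    sum_single_mul_mul_single, sum_single_transpose_mul_mul_single, transpose_transpose, hX, hX',
    Matrix.mul_smul, Matrix.smul_mul, Matrix.mul_one]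
  module

end Stiefel

lemma ip_kronecker_one {ι ρ : Type*} [Fintype ι] [Fintype ρ] [DecidableEq ρ]
    (L : Matrix ι ι ℝ) (X : Matrix (ι × ρ) (ι × ρ) ℝ) :
    ip (L ⊗ₖ (1 : Matrix ρ ρ ℝ)) X = ∑ i, ∑ j, L i j * ∑ a, X (i, a) (j, a) := by
  simp only [ip_eq_sum, Fintype.sum_prod_type, kroneckerMap_apply, one_apply, mul_ite, mul_one,
    mul_zero, ite_mul, zero_mul, Finset.sum_ite_eq, Finset.mem_univ, if_true, Finset.mul_sum]
  exact Finset.sum_congr rfl fun _ _ => Finset.sum_comm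

section Laplacian

variable {ι S : Type*} [Fintype ι] [DecidableEq ι]

/-- The Laplacian `diag(A·1) - A` of the graph with weight matrix `A`. -/
def weightedLaplacian [NonAssocRing S] (A : Matrix ι ι S) : Matrix ι ι S :=
  diagonal (A *ᵥ 1) - A

lemma lapMatrix_eq_weightedLaplacian [NonAssocRing S] (G : SimpleGraph ι) [DecidableRel G.Adj] :
    G.lapMatrix S = weightedLaplacian (G.adjMatrix S) := by
  rw [SimpleGraph.lapMatrix, SimpleGraph.degMatrix, weightedLaplacian]
  congr 2
  ext i
  simp

lemma sum_weightedLaplacian_mul [NonAssocRing S] (A : Matrix ι ι S) (f : ι → ι → S) :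
    ∑ i, ∑ j, weightedLaplacian A i j * f i j = ∑ i, ∑ j, A i j * (f i i - f i j) := by
  simp only [weightedLaplacian, Matrix.sub_apply, diagonal_apply, mulVec, dotProduct, Pi.one_apply,
    mul_one, sub_mul, ite_mul, zero_mul, mul_sub, Finset.sum_sub_distrib, Finset.sum_ite_eq,
    Finset.mem_univ, if_true, Finset.sum_mul]

end Laplacian

section Blocks

variable {n r p : ℕ}

lemma frobSq_eq_sum_blk (M : Matrix (Fin n × Fin r) (Fin p) ℝ) :
    frobSq M = ∑ i, frobSq (blk M i) :=
  Fintype.sum_prod_type _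

/-- The ground truth `Z = (I_r, …, I_r)`, to which the stack `Y` is compared. -/
def idStack (n r : ℕ) : Matrix (Fin n × Fin r) (Fin r) ℝ := Zstack fun _ => 1

lemma idStack_mul_transpose_apply (q q' : Fin n × Fin r) :
    (idStack n r * (idStack n r)ᵀ) q q' = if q.2 = q'.2 then 1 else 0 := by
  change (1 * 1ᵀ : Matrix (Fin r) (Fin r) ℝ) q.2 q'.2 = _
  rw [transpose_one, Matrix.mul_one, one_apply]

lemma blk_sub_idStack_mul (Y : Matrix (Fin n × Fin r) (Fin p) ℝ) (R : Matrix (Fin r) (Fin p) ℝ)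
    (i : Fin n) : blk (Y - idStack n r * R) i = blk Y i - R :=
  congrArg (blk Y i - ·) (Matrix.one_mul R)

/-- The `n × n` matrix of the inner products `tr(Y_i Y_jᵀ)` of the blocks of `Y`, the only data of
`Y` that the Laplacian terms see. -/
def blockGram (Y : Matrix (Fin n × Fin r) (Fin p) ℝ) : Matrix (Fin n) (Fin n) ℝ :=
  of fun i j => (blk Y i * (blk Y j)ᵀ).trace

lemma blockGram_apply (Y : Matrix (Fin n × Fin r) (Fin p) ℝ) (i j : Fin n) :
    blockGram Y i j = (blk Y i * (blk Y j)ᵀ).trace :=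
  rfl

lemma blockGram_eq_sum (Y : Matrix (Fin n × Fin r) (Fin p) ℝ) (i j : Fin n) :
    blockGram Y i j = ∑ a, (Y * Yᵀ) (i, a) (j, a) :=
  rfl

lemma blockGram_idStack (i j : Fin n) : blockGram (idStack n r) i j = r := by
  change (1 * 1ᵀ : Matrix (Fin r) (Fin r) ℝ).trace = r
  rw [transpose_one, Matrix.mul_one, trace_one, Fintype.card_fin]

variable {Y : Matrix (Fin n × Fin r) (Fin p) ℝ}

lemma Feasible.mul_transpose_apply (hY : Feasible Y) (i : Fin n) (a b : Fin r) :
    (Y * Yᵀ) (i, a) (i, b) = if a = b then 1 else 0 := by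
  rw [← one_apply, ← hY i]
  rfl

lemma Feasible.blockGram_self (hY : Feasible Y) (i : Fin n) : blockGram Y i i = r := by
  rw [blockGram_apply, hY i, trace_one, Fintype.card_fin]

lemma Feasible.frobSq_blk (hY : Feasible Y) (i : Fin n) : frobSq (blk Y i) = r := by
  rw [frobSq_eq_trace, ← blockGram_apply, hY.blockGram_self]

lemma Feasible.frobSq_eq (hY : Feasible Y) : frobSq Y = r * n := by
  simp only [frobSq_eq_sum_blk, hY.frobSq_blk, Finset.sum_const, Finset.card_univ,
    Fintype.card_fin, nsmul_eq_mul, mul_comm]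

lemma Feasible.frobSq_blk_sub (hY : Feasible Y) (i j : Fin n) :
    frobSq (blk Y i - blk Y j) = 2 * (r - blockGram Y i j) := by
  have hsymm : (blk Y j * (blk Y i)ᵀ).trace = blockGram Y i j := by
    rw [← trace_transpose, transpose_mul, transpose_transpose, blockGram_apply]
  rw [frobSq_eq_trace, transpose_sub, Matrix.sub_mul, Matrix.mul_sub, Matrix.mul_sub, hY i, hY j,
    trace_sub, trace_sub, trace_sub, trace_one, Fintype.card_fin, hsymm, ← blockGram_apply]
  ring

end Blocks

section SecondOrder

variable {n r p : ℕ} {Y : Matrix (Fin n × Fin r) (Fin p) ℝ}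

lemma ip_SBD {X : Matrix (Fin n × Fin r) (Fin n × Fin r) ℝ} {c : ℝ}
    (hX : ∀ i a b, X (i, a) (i, b) = if a = b then c else 0)
    (M : Matrix (Fin n × Fin r) (Fin n × Fin r) ℝ) : ip (SBD M) X = c * M.trace := by
  have hentry (q q') : SBD M q q' * X q q' = if q = q' then c * M q q else 0 := by
    obtain ⟨i, a⟩ := q
    obtain ⟨j, b⟩ := q'
    rcases eq_or_ne i j with rfl | hij
    · rcases eq_or_ne a b with rfl | hab
      · simp only [SBD, of_apply, if_true, hX]; ring
      · simp only [hX, hab, if_false, mul_zero, Prod.mk.injEq, and_false]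
    · simp only [SBD, of_apply, hij, if_false, zero_mul, Prod.mk.injEq, false_and]
  simp only [ip_eq_sum, hentry, Finset.sum_ite_eq, Finset.mem_univ, if_true, trace, diag_apply,
    Finset.mul_sum]

lemma ip_Smat {X : Matrix (Fin n × Fin r) (Fin n × Fin r) ℝ} {c : ℝ}
    (hX : ∀ i a b, X (i, a) (i, b) = if a = b then c else 0)
    (C : Matrix (Fin n × Fin r) (Fin n × Fin r) ℝ) (Y : Matrix (Fin n × Fin r) (Fin p) ℝ) :
    ip (Smat C Y) X = ip C (X - c • (Y * Yᵀ)) := by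
  have hgram : ip C (Y * Yᵀ) = (C * Y * Yᵀ).trace := by
    rw [ip, transpose_mul, transpose_transpose, Matrix.mul_assoc]
  rw [Smat, ip_sub_left, ip_SBD hX, ip_sub_right, ip_smul_right, hgram]

/-- The tangent direction at `Y` whose `i`-th block is `E - Y_i Eᵀ Y_i`. -/
def tangentDir (Y : Matrix (Fin n × Fin r) (Fin p) ℝ) (E : Matrix (Fin r) (Fin p) ℝ) :
    Matrix (Fin n × Fin r) (Fin p) ℝ :=
  of fun q => stiefelTangent (blk Y q.1) E q.2

/-- The sum of `Ẏ Ẏᵀ` over the directions `Ẏ` obtained from the matrix units `E`; equivalently,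
the expectation of `Ẏ Ẏᵀ` for `E` a standard Gaussian matrix. -/
def tangentSecondMoment (Y : Matrix (Fin n × Fin r) (Fin p) ℝ) :
    Matrix (Fin n × Fin r) (Fin n × Fin r) ℝ :=
  ∑ a, ∑ b, tangentDir Y (single a b 1) * (tangentDir Y (single a b 1))ᵀ

lemma Feasible.tangentSecondMoment_eq (hY : Feasible Y) :
    tangentSecondMoment Y = ((p : ℝ) - 2) • (idStack n r * (idStack n r)ᵀ) +
      (blockGram Y).submatrix Prod.fst Prod.fst ⊙ (Y * Yᵀ) := by
  ext q q'
  have hblk := congrFun₂ (sum_stiefelTangent_single_mul_transpose (hY q.1) (hY q'.1)) q.2 q'.2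
  simp only [Matrix.sum_apply] at hblk
  simp only [tangentSecondMoment, Matrix.sum_apply, Matrix.add_apply, Matrix.smul_apply,
    hadamard_apply, submatrix_apply, idStack_mul_transpose_apply]
  refine hblk.trans ?_
  simp only [Fintype.card_fin, Matrix.add_apply, Matrix.smul_apply, one_apply, blockGram_apply]
  rfl

lemma Feasible.tangentSecondMoment_diag (hY : Feasible Y) (i : Fin n) (a b : Fin r) :
    tangentSecondMoment Y (i, a) (i, b) = if a = b then (p : ℝ) + r - 2 else 0 := by
  simp only [hY.tangentSecondMoment_eq, Matrix.add_apply, Matrix.smul_apply, smul_eq_mul,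
    hadamard_apply, submatrix_apply, idStack_mul_transpose_apply, hY.blockGram_self,
    hY.mul_transpose_apply]
  split_ifs <;> ring

lemma Feasible.ip_tangentSecondMoment_nonneg (hY : Feasible Y)
    {C : Matrix (Fin n × Fin r) (Fin n × Fin r) ℝ}
    (hC : ∀ Ydot : Matrix (Fin n × Fin r) (Fin p) ℝ,
      (∀ i, blk Ydot i * (blk Y i)ᵀ + blk Y i * (blk Ydot i)ᵀ = 0) →
      0 ≤ (Smat C Y * Ydot * Ydotᵀ).trace) :
    0 ≤ ip C (tangentSecondMoment Y - ((p : ℝ) + r - 2) • (Y * Yᵀ)) := by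
  rw [← ip_Smat hY.tangentSecondMoment_diag]
  simp only [ip, tangentSecondMoment, transpose_sum, transpose_mul, transpose_transpose,
    Matrix.mul_sum, trace_sum, ← Matrix.mul_assoc]
  exact Finset.sum_nonneg fun a _ => Finset.sum_nonneg fun b _ =>
    hC _ fun i => stiefelTangent_mul_transpose_add (hY i) _

lemma Feasible.ip_laplacian_tangentSecondMoment (hY : Feasible Y) (A : Matrix (Fin n) (Fin n) ℝ) :
    ip (weightedLaplacian A ⊗ₖ (1 : Matrix (Fin r) (Fin r) ℝ))
        (tangentSecondMoment Y - ((p : ℝ) + r - 2) • (Y * Yᵀ)) =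
      ∑ i, ∑ j, A i j * ((r - blockGram Y i j) * (blockGram Y i j + 2 - p)) := by
  have htrace (i j : Fin n) :
      ∑ a, (tangentSecondMoment Y - ((p : ℝ) + r - 2) • (Y * Yᵀ)) (i, a) (j, a) =
        r * (p - 2) + blockGram Y i j ^ 2 - (p + r - 2) * blockGram Y i j := by
    simp only [hY.tangentSecondMoment_eq, Matrix.sub_apply, Matrix.add_apply, Matrix.smul_apply,
      smul_eq_mul, hadamard_apply, submatrix_apply, idStack_mul_transpose_apply, if_true,
      Finset.sum_sub_distrib, Finset.sum_add_distrib, ← Finset.mul_sum, ← blockGram_eq_sum,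
      Finset.sum_const, Finset.card_univ, Fintype.card_fin, nsmul_eq_mul]
    ring
  rw [ip_kronecker_one]
  simp only [htrace, sum_weightedLaplacian_mul, hY.blockGram_self]
  refine Finset.sum_congr rfl fun i _ => Finset.sum_congr rfl fun j _ => ?_
  ring

lemma Feasible.sum_laplacian_add_sum_frobSq_sq (hY : Feasible Y) (A : Matrix (Fin n) (Fin n) ℝ) :
    ((p : ℝ) - r - 2) * (∑ i, ∑ j, weightedLaplacian A i j * blockGram Y i j) +
        1 / 4 * ∑ i, ∑ j, A i j * frobSq (blk Y i - blk Y j) ^ 2 =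
      -ip (weightedLaplacian A ⊗ₖ (1 : Matrix (Fin r) (Fin r) ℝ))
        (tangentSecondMoment Y - ((p : ℝ) + r - 2) • (Y * Yᵀ)) := by
  rw [hY.ip_laplacian_tangentSecondMoment, sum_weightedLaplacian_mul A (blockGram Y)]
  simp only [hY.frobSq_blk_sub, hY.blockGram_self, Finset.mul_sum,
    ← Finset.sum_add_distrib, ← Finset.sum_neg_distrib]
  refine Finset.sum_congr rfl fun i _ => Finset.sum_congr rfl fun j _ => ?_
  ring

end SecondOrder

section Noise

variable {n r p k l : ℕ} {Y : Matrix (Fin n × Fin r) (Fin p) ℝ}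

lemma frobSq_idStack : frobSq (idStack n r) = r * n := by
  have hF : Feasible (idStack n r) := fun _ => by
    change (1 : Matrix (Fin r) (Fin r) ℝ) * 1ᵀ = 1
    rw [transpose_one, Matrix.one_mul]
  exact hF.frobSq_eq

lemma Feasible.frobSq_idStack_sub_mul_transpose_le (hY : Feasible Y)
    (R : Matrix (Fin r) (Fin p) ℝ) :
    frobSq (idStack n r - Y * Rᵀ) ≤ frobSq (Y - idStack n r * R) := by
  have hblk (i : Fin n) :
      blk (idStack n r - Y * Rᵀ) i = blk Y i * (blk (Y - idStack n r * R) i)ᵀ := by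
    rw [blk_sub_idStack_mul, transpose_sub, Matrix.mul_sub, hY i]
    rfl
  rw [frobSq_eq_sum_blk, frobSq_eq_sum_blk]
  exact Finset.sum_le_sum fun i _ => hblk i ▸ frobSq_mul_transpose_le (hY i) _

lemma Feasible.abs_ip_gram_sub_idStack_le (hY : Feasible Y)
    (D : Matrix (Fin n × Fin r) (Fin n × Fin r) ℝ) (R : Matrix (Fin r) (Fin p) ℝ) :
    |ip D (Y * Yᵀ - idStack n r * (idStack n r)ᵀ)| ≤
      2 * opNorm D * √(r * n) * √(frobSq (Y - idStack n r * R)) := by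
  have hU := Real.sqrt_le_sqrt (hY.frobSq_idStack_sub_mul_transpose_le R)
  refine (abs_ip_mul_transpose_sub_le D Y (idStack n r) R).trans ?_
  rw [hY.frobSq_eq, frobSq_idStack]
  have hbound := mul_le_mul_of_nonneg_left
    (mul_le_mul_of_nonneg_right hU (Real.sqrt_nonneg (r * n))) (opNorm_nonneg D)
  linarith

/-- The `n × n` matrix of the inner products of the `r × r` blocks of `D` with those of `Y Yᵀ`; it
is the weight of `blockGram Y` in the noise term. -/
def blockPairing (D : Matrix (Fin n × Fin r) (Fin n × Fin r) ℝ)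
    (Y : Matrix (Fin n × Fin r) (Fin p) ℝ) : Matrix (Fin n) (Fin n) ℝ :=
  of fun i j => ∑ a, ∑ b, D (i, a) (j, b) * (Y * Yᵀ) (i, a) (j, b)

lemma ip_blockPairing (D : Matrix (Fin n × Fin r) (Fin n × Fin r) ℝ)
    (Y : Matrix (Fin n × Fin r) (Fin p) ℝ) (X : Matrix (Fin n) (Fin n) ℝ) :
    ip (blockPairing D Y) X = ip D (X.submatrix Prod.fst Prod.fst ⊙ (Y * Yᵀ)) := by
  simp only [ip_eq_sum, Fintype.sum_prod_type, blockPairing, of_apply, hadamard_apply,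
    submatrix_apply, Finset.sum_mul]
  refine Finset.sum_congr rfl fun i _ => ?_
  rw [Finset.sum_comm]
  refine Finset.sum_congr rfl fun a _ => Finset.sum_congr rfl fun j _ =>
    Finset.sum_congr rfl fun b _ => ?_
  ring

/-- The stack with blocks `x_i Y_i`; it expresses the bilinear form of `blockPairing D Y` through
`D`. -/
def blockScale (x : Fin n → ℝ) (Y : Matrix (Fin n × Fin r) (Fin p) ℝ) :
    Matrix (Fin n × Fin r) (Fin p) ℝ :=
  of fun q c => x q.1 * Y q c

lemma Feasible.frobSq_blockScale (hY : Feasible Y) (x : Fin n → ℝ) :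
    frobSq (blockScale x Y) = r * ∑ i, x i ^ 2 := by
  have hblk (i : Fin n) : ∑ a, ∑ c, Y (i, a) c ^ 2 = r := hY.frobSq_blk i
  simp only [frobSq, blockScale, of_apply, Fintype.sum_prod_type, mul_pow, ← Finset.mul_sum, hblk]
  rw [← Finset.sum_mul, mul_comm]

lemma dotProduct_blockPairing_mulVec (D : Matrix (Fin n × Fin r) (Fin n × Fin r) ℝ)
    (Y : Matrix (Fin n × Fin r) (Fin p) ℝ) (x y : Fin n → ℝ) :
    x ⬝ᵥ blockPairing D Y *ᵥ y = ip D (blockScale x Y * (blockScale y Y)ᵀ) := by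
  have hentry : blockScale x Y * (blockScale y Y)ᵀ =
      (vecMulVec x y).submatrix Prod.fst Prod.fst ⊙ (Y * Yᵀ) := by
    ext q q'
    simp only [blockScale, mul_apply, transpose_apply, of_apply, hadamard_apply, submatrix_apply,
      vecMulVec_apply, Finset.mul_sum]
    exact Finset.sum_congr rfl fun _ _ => mul_mul_mul_comm _ _ _ _
  rw [hentry, ← ip_blockPairing]
  simp only [ip_eq_sum, dotProduct, mulVec, vecMulVec_apply, Finset.mul_sum]
  exact Finset.sum_congr rfl fun i _ => Finset.sum_congr rfl fun j _ => by ring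

lemma Feasible.opNorm_blockPairing_le (hY : Feasible Y)
    (D : Matrix (Fin n × Fin r) (Fin n × Fin r) ℝ) :
    opNorm (blockPairing D Y) ≤ r * opNorm D := by
  refine opNorm_le_of_dotProduct_mulVec_le (mul_nonneg r.cast_nonneg (opNorm_nonneg D))
    fun x y => ?_
  calc x ⬝ᵥ blockPairing D Y *ᵥ y
      ≤ opNorm D * (√(r * ∑ i, x i ^ 2) * √(r * ∑ i, y i ^ 2)) := by
        rw [dotProduct_blockPairing_mulVec, ← hY.frobSq_blockScale, ← hY.frobSq_blockScale]
        exact le_of_abs_le (abs_ip_mul_transpose_le D _ _)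
    _ = opNorm D * (√r * √r * (√(∑ i, x i ^ 2) * √(∑ i, y i ^ 2))) := by
        rw [Real.sqrt_mul r.cast_nonneg, Real.sqrt_mul r.cast_nonneg]; ring
    _ = r * opNorm D * (√(∑ i, x i ^ 2) * √(∑ i, y i ^ 2)) := by
        rw [Real.mul_self_sqrt r.cast_nonneg]; ring

/-- The stack `Y` regarded as the `n × rk` matrix whose rows are the vectorized blocks, so that
`blockGram Y` is a Gram matrix. -/
def flatten (Y : Matrix (Fin n × Fin r) (Fin k) ℝ) : Matrix (Fin n) (Fin r × Fin k) ℝ :=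
  of fun i ac => Y (i, ac.1) ac.2

lemma frobSq_flatten (Y : Matrix (Fin n × Fin r) (Fin k) ℝ) : frobSq (flatten Y) = frobSq Y := by
  simp only [frobSq, flatten, of_apply, Fintype.sum_prod_type]

lemma flatten_mul_transpose (Y : Matrix (Fin n × Fin r) (Fin k) ℝ) :
    flatten Y * (flatten Y)ᵀ = blockGram Y := by
  ext i j
  rw [blockGram_apply, trace_mul_transpose, mul_apply]
  exact Fintype.sum_prod_type _

lemma flatten_sub_mul (X : Matrix (Fin n × Fin r) (Fin k) ℝ)
    (Z : Matrix (Fin n × Fin r) (Fin l) ℝ) (R : Matrix (Fin l) (Fin k) ℝ) :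
    flatten (X - Z * R) = flatten X - flatten Z * ((1 : Matrix (Fin r) (Fin r) ℝ) ⊗ₖ R) := by
  ext i ⟨a, c⟩
  simp only [flatten, of_apply, Matrix.sub_apply, mul_apply, Fintype.sum_prod_type,
    kroneckerMap_apply, one_apply, ite_mul, one_mul, zero_mul, mul_ite, mul_zero,
    Finset.sum_ite_irrel, Finset.sum_const_zero, Finset.sum_ite_eq', Finset.mem_univ, if_true]

lemma Feasible.abs_ip_blockGram_sub_le (hY : Feasible Y) (B : Matrix (Fin n) (Fin n) ℝ)
    (R : Matrix (Fin r) (Fin p) ℝ) :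
    |ip B (blockGram Y - blockGram (idStack n r))| ≤
      2 * opNorm B * √(r * n) * √(frobSq (Y - idStack n r * R)) := by
  have hU := Real.sqrt_le_sqrt (hY.frobSq_idStack_sub_mul_transpose_le R)
  have hbound := abs_ip_mul_transpose_sub_le B (flatten Y) (flatten (idStack n r))
    ((1 : Matrix (Fin r) (Fin r) ℝ) ⊗ₖ R)
  have htranspose : ((1 : Matrix (Fin r) (Fin r) ℝ) ⊗ₖ R)ᵀ =
      (1 : Matrix (Fin r) (Fin r) ℝ) ⊗ₖ Rᵀ := by
    rw [← kroneckerMap_transpose, transpose_one]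
  rw [htranspose, ← flatten_sub_mul, ← flatten_sub_mul] at hbound
  simp only [frobSq_flatten, flatten_mul_transpose, hY.frobSq_eq, frobSq_idStack] at hbound
  have hUB := mul_le_mul_of_nonneg_left
    (mul_le_mul_of_nonneg_right hU (Real.sqrt_nonneg (r * n))) (opNorm_nonneg B)
  linarith

end Noise

section Combination

variable {n r p : ℕ} {Y : Matrix (Fin n × Fin r) (Fin p) ℝ}

lemma Feasible.ip_tangentSecondMoment_sub (hY : Feasible Y)
    (D : Matrix (Fin n × Fin r) (Fin n × Fin r) ℝ) :
    ip D (tangentSecondMoment Y - ((p : ℝ) + r - 2) • (Y * Yᵀ)) =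
      ip (blockPairing D Y) (blockGram Y - blockGram (idStack n r)) -
        ((p : ℝ) - 2) * ip D (Y * Yᵀ - idStack n r * (idStack n r)ᵀ) := by
  rw [ip_blockPairing, ← ip_smul_right, ← ip_sub_right, hY.tangentSecondMoment_eq]
  congr 1
  ext q q'
  simp only [Matrix.sub_apply, Matrix.add_apply, Matrix.smul_apply, hadamard_apply,
    submatrix_apply, blockGram_idStack, smul_eq_mul]
  ring

/-- The orthogonal group `O(1)` is discrete, so it has no tangent directions. -/
lemma Feasible.tangentSecondMoment_eq_zero {Y : Matrix (Fin n × Fin 1) (Fin 1) ℝ}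
    (hY : Feasible Y) : tangentSecondMoment Y = 0 := by
  have hsq (i : Fin n) : Y (i, 0) 0 * Y (i, 0) 0 = 1 := by
    simpa [mul_apply] using hY.mul_transpose_apply i 0 0
  rw [hY.tangentSecondMoment_eq]
  ext ⟨i, a⟩ ⟨j, b⟩
  obtain rfl := Subsingleton.elim a 0
  obtain rfl := Subsingleton.elim b 0
  rw [Matrix.add_apply, Matrix.smul_apply, idStack_mul_transpose_apply, hadamard_apply]
  simp only [submatrix_apply, blockGram_eq_sum, mul_apply, transpose_apply, Finset.univ_unique,
    Fin.default_eq_zero, Finset.sum_singleton, if_true, smul_eq_mul, Matrix.zero_apply]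
  linear_combination (Y (j, 0) 0 * Y (j, 0) 0) * hsq i + hsq j

lemma Feasible.neg_ip_tangentSecondMoment_sub_le (hY : Feasible Y) (hr : 1 ≤ r) (hrp : r ≤ p)
    (D : Matrix (Fin n × Fin r) (Fin n × Fin r) ℝ) (R : Matrix (Fin r) (Fin p) ℝ) :
    -ip D (tangentSecondMoment Y - ((p : ℝ) + r - 2) • (Y * Yᵀ)) ≤
      2 * ((p : ℝ) + r - 2) * opNorm D * √(r * n) * √(frobSq (Y - idStack n r * R)) := by
  rcases le_or_gt 2 p with hp | hp
  · have hp' : (0 : ℝ) ≤ p - 2 := sub_nonneg.2 (mod_cast hp)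
    have hgram := mul_le_mul_of_nonneg_left (le_of_abs_le (hY.abs_ip_gram_sub_idStack_le D R)) hp'
    have hpair := neg_le_of_abs_le (hY.abs_ip_blockGram_sub_le (blockPairing D Y) R)
    have hnorm : opNorm (blockPairing D Y) * (2 * √(r * n) * √(frobSq (Y - idStack n r * R))) ≤
        r * opNorm D * (2 * √(r * n) * √(frobSq (Y - idStack n r * R))) :=
      mul_le_mul_of_nonneg_right (hY.opNorm_blockPairing_le D) (by positivity)
    rw [hY.ip_tangentSecondMoment_sub]
    linarith
  · obtain rfl : p = 1 := by lia
    obtain rfl : r = 1 := by lia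
    norm_num [hY.tangentSecondMoment_eq_zero, ip]

end Combination

theorem noisy_second_order_inequality_general {n r p : ℕ} (hr : 1 ≤ r) (hrp : r ≤ p)
    (A : Matrix (Fin n) (Fin n) ℝ) (Δ : Matrix (Fin n × Fin r) (Fin n × Fin r) ℝ)
    {Y : Matrix (Fin n × Fin r) (Fin p) ℝ} (hY : Feasible Y)
    (hsecond : ∀ Ydot : Matrix (Fin n × Fin r) (Fin p) ℝ,
      (∀ i, blk Ydot i * (blk Y i)ᵀ + blk Y i * (blk Ydot i)ᵀ = 0) →
      0 ≤ (Smat (weightedLaplacian A ⊗ₖ (1 : Matrix (Fin r) (Fin r) ℝ) - Δ) Y *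
        Ydot * Ydotᵀ).trace)
    (R : Matrix (Fin r) (Fin p) ℝ)
    {W : Matrix (Fin n × Fin r) (Fin p) ℝ} (hW : ∀ i, blk W i = blk Y i - R) :
    ((p : ℝ) - r - 2) *
        (∑ i, ∑ j, weightedLaplacian A i j * (blk Y i * (blk Y j)ᵀ).trace)
      + (1 / 4) * (∑ i, ∑ j, A i j * (frobSq (blk W i - blk W j)) ^ 2)
      ≤ 2 * ((p : ℝ) + r - 2) * opNorm Δ * √(r * n) * √(frobSq W) := by
  have hWY : W = Y - idStack n r * R := by
    ext ⟨i, a⟩ c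
    exact congrFun₂ ((hW i).trans (blk_sub_idStack_mul Y R i).symm) a c
  have haverage := hY.ip_tangentSecondMoment_nonneg hsecond
  rw [ip_sub_left] at haverage
  have hlaplacian := hY.sum_laplacian_add_sum_frobSq_sq A
  have hnoise := hY.neg_ip_tangentSecondMoment_sub_le hr hrp Δ R
  simp only [hW, sub_sub_sub_cancel_right, ← blockGram_apply]
  rw [hWY]
  linarith

/-- **Key second-order inequality, noisy case.**  Suppose all `Z_i = I_r`, so
`L̂ = L ⊗ I_r − Δ`.  If `Y` is a second-order critical point, `R = (1/n) Σ_i Y_i`,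
`W_i = Y_i − R`, and `W` is the stack of the `W_i`, then
`(p − r − 2) Σ_{ij} L_ij tr(Y_i Y_jᵀ) + (1/4) Σ_{ij} A_ij ‖W_i − W_j‖_F⁴
  ≤ 2(p + r − 2) ‖Δ‖ √(rn) ‖W‖_F`. -/
theorem noisy_second_order_inequality
    (n r p : ℕ) (hn : 1 ≤ n) (hr : 1 ≤ r) (hrp : r ≤ p)
    (G : SimpleGraph (Fin n)) [DecidableRel G.Adj]
    (Δ : Matrix (Fin n × Fin r) (Fin n × Fin r) ℝ) (hΔsym : Δᵀ = Δ)
    (hΔsupp : ∀ q q' : Fin n × Fin r, ¬ G.Adj q.1 q'.1 → Δ q q' = 0)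
    (Lhat : Matrix (Fin n × Fin r) (Fin n × Fin r) ℝ)
    (hLhat : Lhat = (G.lapMatrix ℝ) ⊗ₖ (1 : Matrix (Fin r) (Fin r) ℝ) - Δ)
    (Y : Matrix (Fin n × Fin r) (Fin p) ℝ)
    (hY : IsSecondOrderCritical Lhat Y)
    (R : Matrix (Fin r) (Fin p) ℝ) (hR : R = ((n : ℝ)⁻¹) • ∑ i, blk Y i)
    (W : Matrix (Fin n × Fin r) (Fin p) ℝ) (hW : ∀ i, blk W i = blk Y i - R) :
    ((p : ℝ) - r - 2) *
        (∑ i, ∑ j, G.lapMatrix ℝ i j * (blk Y i * (blk Y j)ᵀ).trace)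
      + (1 / 4) *
        (∑ i, ∑ j, G.adjMatrix ℝ i j * (frobSq (blk W i - blk W j)) ^ 2)
      ≤ 2 * ((p : ℝ) + r - 2) * opNorm Δ * Real.sqrt (r * n) * Real.sqrt (frobSq W) := by
  obtain ⟨hfeas, -, hsecond⟩ := hY
  subst hLhat
  rw [lapMatrix_eq_weightedLaplacian] at hsecond ⊢
  exact noisy_second_order_inequality_general hr hrp _ Δ hfeas hsecond R hW

end SyncPaper
end

section
/- (Gaussian covariance of random tangent vectors, complex case.) Let Γ ∈ ℂ^{r×p} be a random matrix whose entries are i.i.d. standard complex normal random variables (independent real and imaginary parts, each N(0, 1/2)), and let Y_i, Y_j ∈ ℂ^{r×p} satisfy Y_i Y_i* = Y_j Y_j* = I_r, where * is conjugate transpose. For k ∈ {i,j} set Ẏ_k = 2Γ(I_p − Y_k* Y_k) + (Γ Y_k* − Y_k Γ*) Y_k. Then the entrywise expectation satisfies E[Ẏ_i Ẏ_j*] = (4(p − r) + ‖Y_i Y_j*‖_F²) I_r + tr(Y_i Y_j*) · Y_i Y_j*. -/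
open Matrix MeasureTheory ProbabilityTheory

/-- The standard complex normal distribution on `ℂ`: independent real and imaginary parts,
each `N(0, 1/2)`. -/
noncomputable def stdComplexGaussian : Measure ℂ :=
  ((gaussianReal 0 (1 / 2)).prod (gaussianReal 0 (1 / 2))).map
    Complex.measurableEquivRealProd.symm

/-- The law of an `r × p` random matrix with i.i.d. standard complex normal entries
(entries viewed as functions `Fin r → Fin p → ℂ`). -/
noncomputable def gaussMatComplex (r p : ℕ) : Measure (Fin r → Fin p → ℂ) :=
  Measure.pi fun _ : Fin r => Measure.pi fun _ : Fin p => stdComplexGaussian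

/-- The tangent vector `Ẏ = 2Γ(I_p − Y* Y) + (Γ Y* − Y Γ*) Y` at `Y ∈ St(r,p,ℂ)`. -/
noncomputable def cplxTangent {r p : ℕ} (Y Γ : Matrix (Fin r) (Fin p) ℂ) :
    Matrix (Fin r) (Fin p) ℂ :=
  (2 : ℂ) • (Γ * ((1 : Matrix (Fin p) (Fin p) ℂ) - Yᴴ * Y)) + (Γ * Yᴴ - Y * Γᴴ) * Y

/-! A random matrix `Γ` with mutually uncorrelated entries, vanishing pseudo-variances and unit
variances satisfies `E[Γ A Γ*] = tr A • 1` and `E[Γ A Γ] = 0`; since `Γ*` is a matrix of the same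
kind, also `E[Γ* A Γ] = tr A • 1` and `E[Γ* A Γ*] = 0`. Writing
`Ẏ = Γ (2 - Y* Y) - Y Γ* Y`, the product `Ẏᵢ Ẏⱼ*` expands into four terms of these shapes, of which
the two mixed ones average to zero. Complex Gaussian entries enter only through their second
moments; `E z = 0` and `E z² = 0` follow from the invariance of the law under multiplication by
`i`, which gives `E z = i E z` and `E z² = -E z²`. -/

section ExpectedMatrix

variable {Ω 𝕜 k l m n : Type*} [RCLike 𝕜] [MeasurableSpace Ω] {μ : Measure Ω}

/-- The random matrix `X` has entrywise expectation `M`. Integrability of the entries is part of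
the notion, so that no junk value of the integral is involved. -/
structure HasExpectation (μ : Measure Ω) (X : Ω → Matrix m n 𝕜) (M : Matrix m n 𝕜) : Prop where
  integrable : ∀ i j, Integrable (fun ω => X ω i j) μ
  integral_eq : ∀ i j, ∫ ω, X ω i j ∂μ = M i j

namespace HasExpectation

variable {X Y : Ω → Matrix m n 𝕜} {M N : Matrix m n 𝕜}

theorem add (hX : HasExpectation μ X M) (hY : HasExpectation μ Y N) :
    HasExpectation μ (fun ω => X ω + Y ω) (M + N) where
  integrable i j := (hX.integrable i j).add (hY.integrable i j)
  integral_eq i j := by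
    simp only [Matrix.add_apply, integral_add (hX.integrable i j) (hY.integrable i j),
      hX.integral_eq, hY.integral_eq]

theorem sub (hX : HasExpectation μ X M) (hY : HasExpectation μ Y N) :
    HasExpectation μ (fun ω => X ω - Y ω) (M - N) where
  integrable i j := (hX.integrable i j).sub (hY.integrable i j)
  integral_eq i j := by
    simp only [Matrix.sub_apply, integral_sub (hX.integrable i j) (hY.integrable i j),
      hX.integral_eq, hY.integral_eq]

theorem const_mul [Fintype m] (A : Matrix l m 𝕜) (hX : HasExpectation μ X M) :
    HasExpectation μ (fun ω => A * X ω) (A * M) where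
  integrable i j := integrable_finsetSum _ fun a _ => (hX.integrable a j).const_mul (A i a)
  integral_eq i j := by
    simp only [Matrix.mul_apply]
    rw [integral_finsetSum _ fun a _ => (hX.integrable a j).const_mul (A i a)]
    simp only [integral_const_mul, hX.integral_eq]

theorem mul_const [Fintype n] (hX : HasExpectation μ X M) (A : Matrix n l 𝕜) :
    HasExpectation μ (fun ω => X ω * A) (M * A) where
  integrable i j := integrable_finsetSum _ fun a _ => (hX.integrable i a).mul_const (A a j)
  integral_eq i j := by
    simp only [Matrix.mul_apply]
    rw [integral_finsetSum _ fun a _ => (hX.integrable i a).mul_const (A a j)]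
    simp only [integral_mul_const, hX.integral_eq]

end HasExpectation

theorem hasExpectation_mul_const_mul [Fintype n] [Fintype k] {X : Ω → Matrix m n 𝕜}
    {Y : Ω → Matrix k l 𝕜} {M : Matrix m l 𝕜} (A : Matrix n k 𝕜)
    (hint : ∀ i j a b, Integrable (fun ω => X ω i j * Y ω a b) μ)
    (hM : ∀ i b, ∑ a, ∑ j, A j a * ∫ ω, X ω i j * Y ω a b ∂μ = M i b) :
    HasExpectation μ (fun ω => X ω * A * Y ω) M := by
  have expand (ω : Ω) (i : m) (b : l) :
      (X ω * A * Y ω) i b = ∑ a, ∑ j, A j a * (X ω i j * Y ω a b) := by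
    simp only [Matrix.mul_apply, Finset.sum_mul]
    exact Finset.sum_congr rfl fun _ _ => Finset.sum_congr rfl fun _ _ => by ring
  have hterm (i : m) (b : l) (a : k) (j : n) :
      Integrable (fun ω => A j a * (X ω i j * Y ω a b)) μ := (hint i j a b).const_mul _
  refine ⟨fun i b => ?_, fun i b => ?_⟩ <;> simp only [expand]
  · exact integrable_finsetSum _ fun a _ => integrable_finsetSum _ fun j _ => hterm i b a j
  · rw [integral_finsetSum _ fun a _ => integrable_finsetSum _ fun j _ => hterm i b a j, ← hM]
    refine Finset.sum_congr rfl fun a _ => ?_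
    rw [integral_finsetSum _ fun j _ => hterm i b a j]
    simp only [integral_const_mul]

end ExpectedMatrix

section WhiteCircular

variable {Ω k m n : Type*} [MeasurableSpace Ω] {μ : Measure Ω} {Γ : Ω → Matrix m n ℂ}
  [DecidableEq m] [DecidableEq n]

/-- The entries of `Γ` have the second moments of independent standard complex normal variables:
`E[Γᵢⱼ Γₖₗ] = 0` (circularity) and `E[Γᵢⱼ conj Γₖₗ] = δᵢₖ δⱼₗ` (whiteness). The Kronecker deltas are
written as entries of identity matrices. -/
structure IsWhiteCircular (μ : Measure Ω) (Γ : Ω → Matrix m n ℂ) : Prop where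
  memLp : ∀ i j, MemLp (fun ω => Γ ω i j) 2 μ
  integral_mul : ∀ i j k l, ∫ ω, Γ ω i j * Γ ω k l ∂μ = 0
  integral_mul_star : ∀ i j k l,
    ∫ ω, Γ ω i j * star (Γ ω k l) ∂μ = (1 : Matrix m m ℂ) i k * (1 : Matrix n n ℂ) j l

namespace IsWhiteCircular

theorem of_pairwise_indepFun {ν : Measure ℂ} (hν : MemLp id 2 ν) (hmean : ∫ z, z ∂ν = 0)
    (hsq : ∫ z, z ^ 2 ∂ν = 0) (hvar : ∫ z, z * star z ∂ν = 1)
    (hlaw : ∀ i j, HasLaw (fun ω => Γ ω i j) ν μ)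
    (hindep : Pairwise fun x y : m × n =>
      IndepFun (fun ω => Γ ω x.1 x.2) (fun ω => Γ ω y.1 y.2) μ) :
    IsWhiteCircular μ Γ := by
  have hmem (i : m) (j : n) : MemLp (fun ω => Γ ω i j) 2 μ :=
    ((hlaw i j).map_eq.symm ▸ hν).comp_of_map (hlaw i j).aemeasurable
  have hzero (i : m) (j : n) : ∫ ω, Γ ω i j ∂μ = 0 := (hlaw i j).integral_eq.trans hmean
  refine ⟨hmem, fun i j k l => ?_, fun i j k l => ?_⟩ <;>
    rcases eq_or_ne (i, j) (k, l) with heq | hne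
  · obtain ⟨rfl, rfl⟩ := Prod.mk.inj heq
    simpa [sq] using ((hlaw i j).integral_comp (hν.1.pow 2)).trans hsq
  · rw [(hindep hne).integral_fun_mul_eq_mul_integral (hmem i j).1 (hmem k l).1, hzero i j,
      zero_mul]
  · obtain ⟨rfl, rfl⟩ := Prod.mk.inj heq
    simpa using ((hlaw i j).integral_comp (hν.1.mul hν.1.star)).trans hvar
  · have hind : IndepFun (fun ω => Γ ω i j) (fun ω => star (Γ ω k l)) μ :=
      (hindep hne).comp measurable_id continuous_star.measurable
    rw [hind.integral_fun_mul_eq_mul_integral (hmem i j).1 (hmem k l).1.star, hzero i j, zero_mul]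
    by_cases hik : i = k <;> simp_all [Matrix.one_apply]

theorem conjTranspose (hΓ : IsWhiteCircular μ Γ) : IsWhiteCircular μ fun ω => (Γ ω)ᴴ where
  memLp i j := (hΓ.memLp j i).star
  integral_mul i j k l :=
    calc ∫ ω, (Γ ω)ᴴ i j * (Γ ω)ᴴ k l ∂μ
      _ = ∫ ω, starRingEnd ℂ (Γ ω j i * Γ ω l k) ∂μ := by simp [conjTranspose_apply]
      _ = 0 := by rw [integral_conj, hΓ.integral_mul, map_zero]
  integral_mul_star i j k l := by
    simp only [conjTranspose_apply, star_star, mul_comm (star _), hΓ.integral_mul_star l k j i]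
    simp [Matrix.one_apply, eq_comm, mul_comm]

variable [Fintype n]

theorem hasExpectation_mul_mul_conjTranspose (hΓ : IsWhiteCircular μ Γ) (A : Matrix n n ℂ) :
    HasExpectation μ (fun ω => Γ ω * A * (Γ ω)ᴴ) (A.trace • 1) := by
  refine hasExpectation_mul_const_mul A
    (fun i j a b => (hΓ.memLp i j).integrable_mul (hΓ.memLp b a).star) fun i b => ?_
  simp only [conjTranspose_apply, hΓ.integral_mul_star]
  simp [Matrix.one_apply, Matrix.trace]

theorem hasExpectation_mul_mul_self [Fintype m] (hΓ : IsWhiteCircular μ Γ) (A : Matrix n m ℂ) :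
    HasExpectation μ (fun ω => Γ ω * A * Γ ω) 0 :=
  hasExpectation_mul_const_mul A (fun i j a b => (hΓ.memLp i j).integrable_mul (hΓ.memLp a b))
    fun i b => by simp [hΓ.integral_mul]

theorem hasExpectation_sub_mul_conjTranspose_sub [Fintype m] [Fintype k]
    (hΓ : IsWhiteCircular μ Γ) (A A' : Matrix n k ℂ) (B B' : Matrix m n ℂ) (C C' : Matrix m k ℂ) :
    HasExpectation μ
      (fun ω => (Γ ω * A - B * (Γ ω)ᴴ * C) * (Γ ω * A' - B' * (Γ ω)ᴴ * C')ᴴ)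
      ((A * A'ᴴ).trace • 1 + (C * C'ᴴ).trace • (B * B'ᴴ)) := by
  have expand (G : Matrix m n ℂ) :
      (G * A - B * Gᴴ * C) * (G * A' - B' * Gᴴ * C')ᴴ =
        G * (A * A'ᴴ) * Gᴴ - G * (A * C'ᴴ) * G * B'ᴴ - B * (Gᴴ * (C * A'ᴴ) * Gᴴ)
          + B * (Gᴴ * (C * C'ᴴ) * Gᴴᴴ) * B'ᴴ := by
    simp only [conjTranspose_sub, conjTranspose_mul, conjTranspose_conjTranspose, Matrix.mul_sub,
      Matrix.sub_mul, Matrix.mul_assoc]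
    abel
  have h := (((hΓ.hasExpectation_mul_mul_conjTranspose (A * A'ᴴ)).sub
    ((hΓ.hasExpectation_mul_mul_self (A * C'ᴴ)).mul_const B'ᴴ)).sub
    ((hΓ.conjTranspose.hasExpectation_mul_mul_self (C * A'ᴴ)).const_mul B)).add
    (((hΓ.conjTranspose.hasExpectation_mul_mul_conjTranspose (C * C'ᴴ)).const_mul B).mul_const B'ᴴ)
  simp only [expand]
  simpa using h

end IsWhiteCircular

end WhiteCircular

section StandardComplexGaussian

open Complex

theorem integral_pow_eq_zero_of_measurePreserving_mul {𝕜 : Type*} [RCLike 𝕜] [MeasurableSpace 𝕜]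
    [BorelSpace 𝕜] {ν : Measure 𝕜} {c : 𝕜} {k : ℕ} (hc : c ^ k ≠ 1)
    (hν : MeasurePreserving (fun z => c * z) ν ν) : ∫ z, z ^ k ∂ν = 0 := by
  have h : ∫ z, (c * z) ^ k ∂ν = ∫ z, z ^ k ∂ν :=
    hν.hasLaw.integral_comp (f := fun z => z ^ k) (by fun_prop)
  simp only [mul_pow, integral_const_mul] at h
  exact (mul_left_eq_self₀.1 h).resolve_left hc

instance : IsProbabilityMeasure stdComplexGaussian :=
  Measure.isProbabilityMeasure_map measurableEquivRealProd.symm.measurable.aemeasurable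

theorem measurePreserving_measurableEquivRealProd_stdComplexGaussian :
    MeasurePreserving measurableEquivRealProd stdComplexGaussian
      ((gaussianReal 0 (1 / 2)).prod (gaussianReal 0 (1 / 2))) :=
  (measurableEquivRealProd.symm.measurable.measurePreserving _).symm

theorem measurePreserving_re_stdComplexGaussian :
    MeasurePreserving Complex.re stdComplexGaussian (gaussianReal 0 (1 / 2)) :=
  measurePreserving_fst.comp measurePreserving_measurableEquivRealProd_stdComplexGaussian

theorem measurePreserving_im_stdComplexGaussian :
    MeasurePreserving Complex.im stdComplexGaussian (gaussianReal 0 (1 / 2)) :=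
  measurePreserving_snd.comp measurePreserving_measurableEquivRealProd_stdComplexGaussian

theorem measurePreserving_I_mul_stdComplexGaussian :
    MeasurePreserving (fun z => I * z) stdComplexGaussian stdComplexGaussian := by
  have hneg : MeasurePreserving (fun x : ℝ => -x) (gaussianReal 0 (1 / 2))
      (gaussianReal 0 (1 / 2)) := ⟨measurable_neg, by rw [gaussianReal_map_neg, neg_zero]⟩
  have hrot : MeasurePreserving (fun q : ℝ × ℝ => (-q.2, q.1))
      ((gaussianReal 0 (1 / 2)).prod (gaussianReal 0 (1 / 2)))
      ((gaussianReal 0 (1 / 2)).prod (gaussianReal 0 (1 / 2))) :=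
    (hneg.prod (.id _)).comp Measure.measurePreserving_swap
  have hequiv := measurePreserving_measurableEquivRealProd_stdComplexGaussian
  convert hequiv.symm.comp (hrot.comp hequiv) using 1
  ext z
  apply Complex.ext <;> simp

theorem integral_id_stdComplexGaussian : ∫ z, z ∂stdComplexGaussian = 0 := by
  have hI : I ^ 1 ≠ 1 := fun h => by simpa using congrArg Complex.re h
  simpa using integral_pow_eq_zero_of_measurePreserving_mul hI
    measurePreserving_I_mul_stdComplexGaussian

theorem integral_sq_stdComplexGaussian : ∫ z, z ^ 2 ∂stdComplexGaussian = 0 :=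
  integral_pow_eq_zero_of_measurePreserving_mul (by norm_num [I_sq])
    measurePreserving_I_mul_stdComplexGaussian

theorem memLp_id_stdComplexGaussian : MemLp id 2 stdComplexGaussian := by
  have hγ : MemLp id 2 (gaussianReal 0 (1 / 2)) := memLp_id_gaussianReal 2
  exact memLp_re_im_iff.1
    ⟨hγ.comp_measurePreserving measurePreserving_re_stdComplexGaussian,
      hγ.comp_measurePreserving measurePreserving_im_stdComplexGaussian⟩

theorem integral_mul_star_stdComplexGaussian : ∫ z, z * star z ∂stdComplexGaussian = 1 := by
  have hγ : ∫ x, x ^ 2 ∂gaussianReal 0 (1 / 2) = 1 / 2 := by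
    rw [← variance_of_integral_eq_zero (by fun_prop) integral_id_gaussianReal,
      variance_fun_id_gaussianReal, NNReal.coe_div, NNReal.coe_one, NNReal.coe_ofNat]
  have hre : ∫ z, z.re ^ 2 ∂stdComplexGaussian = 1 / 2 :=
    (measurePreserving_re_stdComplexGaussian.hasLaw.integral_comp
      (f := fun x => x ^ 2) (by fun_prop)).trans hγ
  have him : ∫ z, z.im ^ 2 ∂stdComplexGaussian = 1 / 2 :=
    (measurePreserving_im_stdComplexGaussian.hasLaw.integral_comp
      (f := fun x => x ^ 2) (by fun_prop)).trans hγ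
  have hre_int : Integrable (fun z => z.re ^ 2) stdComplexGaussian :=
    memLp_id_stdComplexGaussian.re.integrable_sq
  have him_int : Integrable (fun z => z.im ^ 2) stdComplexGaussian :=
    memLp_id_stdComplexGaussian.im.integrable_sq
  have hnorm (z : ℂ) : z * star z = ((z.re ^ 2 + z.im ^ 2 : ℝ) : ℂ) :=
    (mul_conj z).trans (by rw [normSq_apply, sq, sq])
  simp only [hnorm]
  rw [integral_complex_ofReal, integral_add hre_int him_int, hre, him]
  norm_num

end StandardComplexGaussian

theorem iIndepFun_eval_pi_pi {m n E : Type*} [Fintype m] [Fintype n] [MeasurableSpace E]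
    (ν : m → n → Measure E) [∀ i j, IsProbabilityMeasure (ν i j)] :
    iIndepFun (fun (x : m × n) (g : m → n → E) => g x.1 x.2)
      (Measure.pi fun i => Measure.pi (ν i)) := by
  have h := iIndepFun_uncurry_infinitePi' (X := fun _ _ => id) ν fun _ _ => measurable_id
  simpa only [Measure.infinitePi_eq_pi, id] using h

theorem hasLaw_eval_pi_pi {m n E : Type*} [Fintype m] [Fintype n] [MeasurableSpace E]
    (ν : m → n → Measure E) [∀ i j, IsProbabilityMeasure (ν i j)] (i : m) (j : n) :
    HasLaw (fun g : m → n → E => g i j) (ν i j) (Measure.pi fun i => Measure.pi (ν i)) :=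
  ((measurePreserving_eval (ν i) j).comp
    (measurePreserving_eval (fun i => Measure.pi (ν i)) i)).hasLaw

theorem isWhiteCircular_gaussMatComplex (r p : ℕ) :
    IsWhiteCircular (gaussMatComplex r p) (fun g => of g) :=
  .of_pairwise_indepFun memLp_id_stdComplexGaussian integral_id_stdComplexGaussian
    integral_sq_stdComplexGaussian integral_mul_star_stdComplexGaussian
    (hasLaw_eval_pi_pi fun _ _ => stdComplexGaussian)
    fun _ _ hne => (iIndepFun_eval_pi_pi fun _ _ => stdComplexGaussian).indepFun hne

section Tangent

variable {m n : Type*} [Fintype m] [Fintype n]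

theorem trace_mul_conjTranspose_self_eq_sum_normSq (M : Matrix m n ℂ) :
    (M * Mᴴ).trace = ((∑ i, ∑ j, Complex.normSq (M i j) : ℝ) : ℂ) := by
  simp [Matrix.trace, Matrix.mul_apply, Complex.mul_conj]

theorem trace_two_sub_mul_two_sub [DecidableEq n] (Y Z : Matrix m n ℂ) :
    (((2 : ℂ) • 1 - Yᴴ * Y) * ((2 : ℂ) • 1 - Zᴴ * Z)).trace =
      4 * Fintype.card n - 2 * (Y * Yᴴ).trace - 2 * (Z * Zᴴ).trace
        + ((∑ i, ∑ j, Complex.normSq ((Y * Zᴴ) i j) : ℝ) : ℂ) := by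
  have hcross : (Yᴴ * Y * (Zᴴ * Z)).trace = ((Y * Zᴴ) * (Y * Zᴴ)ᴴ).trace := by
    rw [Matrix.mul_assoc, trace_mul_comm, conjTranspose_mul, conjTranspose_conjTranspose]
    simp only [Matrix.mul_assoc]
  simp only [Matrix.mul_sub, Matrix.sub_mul, smul_mul_assoc, mul_smul_comm, Matrix.one_mul,
    Matrix.mul_one, trace_sub, trace_smul, trace_one, smul_eq_mul, hcross,
    trace_mul_conjTranspose_self_eq_sum_normSq (Y * Zᴴ), trace_mul_comm Yᴴ Y, trace_mul_comm Zᴴ Z]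
  ring

end Tangent

theorem cplxTangent_eq {r p : ℕ} (Y Γ : Matrix (Fin r) (Fin p) ℂ) :
    cplxTangent Y Γ = Γ * ((2 : ℂ) • 1 - Yᴴ * Y) - Y * Γᴴ * Y := by
  simp only [cplxTangent, two_smul, Matrix.mul_sub, Matrix.sub_mul, Matrix.mul_add,
    Matrix.mul_one, Matrix.mul_assoc]
  abel

theorem complex_gaussian_tangent_covariance_general {Ω : Type*} [MeasurableSpace Ω]
    {μ : Measure Ω} {r p : ℕ} {Γ : Ω → Matrix (Fin r) (Fin p) ℂ} (hΓ : IsWhiteCircular μ Γ)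
    (Yi Yj : Matrix (Fin r) (Fin p) ℂ) :
    HasExpectation μ (fun ω => cplxTangent Yi (Γ ω) * (cplxTangent Yj (Γ ω))ᴴ)
      ((4 * p - 2 * (Yi * Yiᴴ).trace - 2 * (Yj * Yjᴴ).trace
          + ((∑ a, ∑ b, Complex.normSq ((Yi * Yjᴴ) a b) : ℝ) : ℂ)) • 1
        + (Yi * Yjᴴ).trace • (Yi * Yjᴴ)) := by
  have hself : ((2 : ℂ) • 1 - Yjᴴ * Yj)ᴴ = (2 : ℂ) • 1 - Yjᴴ * Yj := by simp
  have h := hΓ.hasExpectation_sub_mul_conjTranspose_sub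
    ((2 : ℂ) • 1 - Yiᴴ * Yi) ((2 : ℂ) • 1 - Yjᴴ * Yj) Yi Yj Yi Yj
  rw [hself, trace_two_sub_mul_two_sub, Fintype.card_fin] at h
  simpa only [cplxTangent_eq] using h

/-- **Gaussian covariance of random tangent vectors (complex case).**  If `Γ` has i.i.d.
standard complex normal entries and `Y_i Y_i* = Y_j Y_j* = I_r`, then, with
`Ẏ_k = 2Γ(I_p − Y_k* Y_k) + (Γ Y_k* − Y_k Γ*) Y_k`,
`E[Ẏ_i Ẏ_j*] = (4(p − r) + ‖Y_i Y_j*‖_F²) I_r + tr(Y_i Y_j*) Y_i Y_j*` entrywise. -/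
theorem complex_gaussian_tangent_covariance
    (r p : ℕ) (hr : 1 ≤ r) (hrp : r ≤ p)
    (Yi Yj : Matrix (Fin r) (Fin p) ℂ)
    (hYi : Yi * Yiᴴ = 1) (hYj : Yj * Yjᴴ = 1) :
    ∀ a b : Fin r,
      (∫ g : Fin r → Fin p → ℂ,
          ((cplxTangent Yi (Matrix.of g) * (cplxTangent Yj (Matrix.of g))ᴴ) a b)
          ∂(gaussMatComplex r p))
        = ((4 * ((p : ℂ) - (r : ℂ))
              + ((∑ a', ∑ b', Complex.normSq ((Yi * Yjᴴ) a' b') : ℝ) : ℂ)) •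
              (1 : Matrix (Fin r) (Fin r) ℂ)
            + (Yi * Yjᴴ).trace • (Yi * Yjᴴ)) a b := by
  intro a b
  rw [(complex_gaussian_tangent_covariance_general
    (isWhiteCircular_gaussMatComplex r p) Yi Yj).integral_eq a b, hYi, hYj, trace_one,
    Fintype.card_fin]
  ring_nf
end

section
/- (Key second-order inequality, complex noiseless case.) Suppose the cost matrix is L̂ = L ⊗ I_r (all Z_i = I_r, no noise). Then every second-order critical point Y of the complex rank-p problem satisfies (4p − 6r) Σ_{i,j=1}^n L_ij Re tr(Y_i Y_j*) + (1/2) Σ_{i,j=1}^n A_ij ‖Y_i − Y_j‖_F⁴ ≤ 0; in particular, if G is connected and 2p ≥ 3r, then Y_1 = Y_2 = ⋯ = Y_n. -/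
open Matrix MeasureTheory ProbabilityTheory
open scoped Kronecker BigOperators ComplexOrder

namespace SyncPaper

variable {α : Type*}

/-- `Y` is feasible for the complex problem: every `r × p` row-block satisfies `Y_i Y_i* = I_r`. -/
def FeasibleC {n r p : ℕ} (Y : Matrix (Fin n × Fin r) (Fin p) ℂ) : Prop :=
  ∀ i, blk Y i * (blk Y i)ᴴ = 1

/-- Hermitian block-diagonal projection: keeps the Hermitian part of each `r × r`
diagonal block and zeroes out all off-diagonal blocks. -/
noncomputable def SBDC {n r : ℕ} (M : Matrix (Fin n × Fin r) (Fin n × Fin r) ℂ) :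
    Matrix (Fin n × Fin r) (Fin n × Fin r) ℂ :=
  Matrix.of fun q q' => if q.1 = q'.1 then (M q q' + star (M q' q)) / 2 else 0

/-- The matrix `S(Y) = L̂ − SBD(L̂ Y Y*)`. -/
noncomputable def SmatC {n r p : ℕ} (Lhat : Matrix (Fin n × Fin r) (Fin n × Fin r) ℂ)
    (Y : Matrix (Fin n × Fin r) (Fin p) ℂ) :
    Matrix (Fin n × Fin r) (Fin n × Fin r) ℂ :=
  Lhat - SBDC (Lhat * Y * Yᴴ)

/-- Second-order critical point of the complex rank-`p` problem
`min Re tr(L̂ (Y Y*)*)` over feasible `Y`. -/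
def IsSecondOrderCriticalC {n r p : ℕ} (Lhat : Matrix (Fin n × Fin r) (Fin n × Fin r) ℂ)
    (Y : Matrix (Fin n × Fin r) (Fin p) ℂ) : Prop :=
  FeasibleC Y ∧ SmatC Lhat Y * Y = 0 ∧
    ∀ Ydot : Matrix (Fin n × Fin r) (Fin p) ℂ,
      (∀ i, blk Ydot i * (blk Y i)ᴴ + blk Y i * (blk Ydot i)ᴴ = 0) →
      0 ≤ ((SmatC Lhat Y * Ydot * Ydotᴴ).trace).re

/-- The stacked ground truth `Z ∈ ℂ^{rn × r}`. -/
def ZstackC {n r : ℕ} (Zb : Fin n → Matrix (Fin r) (Fin r) ℂ) :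
    Matrix (Fin n × Fin r) (Fin r) ℂ :=
  Matrix.of fun q b => Zb q.1 q.2 b

/-- The block-diagonal matrix `D` with diagonal blocks `Z_1, …, Z_n`. -/
def DmatC {n r : ℕ} (Zb : Fin n → Matrix (Fin r) (Fin r) ℂ) :
    Matrix (Fin n × Fin r) (Fin n × Fin r) ℂ :=
  Matrix.of fun q q' => if q.1 = q'.1 then Zb q.1 q.2 q'.2 else 0

/-- `L_Z = D (L ⊗ I_r) D*`. -/
noncomputable def LZmatC {n r : ℕ} (L : Matrix (Fin n) (Fin n) ℂ) (Zb : Fin n → Matrix (Fin r) (Fin r) ℂ) :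
    Matrix (Fin n × Fin r) (Fin n × Fin r) ℂ :=
  DmatC Zb * (L ⊗ₖ (1 : Matrix (Fin r) (Fin r) ℂ)) * (DmatC Zb)ᴴ

/-- Squared Frobenius norm of a complex matrix. -/
def frobSqC {m m' : Type*} [Fintype m] [Fintype m'] (M : Matrix m m' ℂ) : ℝ :=
  ∑ i, ∑ j, Complex.normSq (M i j)

end SyncPaper

namespace SyncPaper

/-!
Project an arbitrary `Γ ∈ ℂ^{r×p}` onto the tangent space at each block `Y_i`, and use the stacked
projections as a test direction in the second-order condition. Summing over a real orthonormal
basis of `ℂ^{r×p}` (up to scaling, averaging over a Gaussian `Γ`) replaces `Ẏ_j Ẏ_i*` by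
`W_ji = 2 tr(Q_j Q_i*) I + ½ tr(Y_j Y_i*) Y_j Y_i*`, where `Q_i = I - ½ Y_i* Y_i`. Since `W_ii` is
the scalar `2p - r`, the block-diagonal part of `S(Y)` contributes only
`(2p - r) ∑ L_ij Re tr(Y_i Y_j*)`, so that `0 ≤ ∑ L_ij (Re tr W_ji - (2p - r) Re tr(Y_i Y_j*))`.
Finally `∑ L_ij f_ij = ∑ A_ij (f_ii - f_ij)`, and the bound `|tr X|² ≤ r ‖X‖_F²` for `X = Y_j Y_i*`
makes the inequality an edgewise one in `‖Y_i - Y_j‖_F²`.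
-/

section Matrix

lemma sub_mul_conjTranspose_sub_add_I_smul {m k : Type*} [Fintype k] (A B C D : Matrix m k ℂ) :
    (A - B) * (C - D)ᴴ + (Complex.I • (A + B)) * (Complex.I • (C + D))ᴴ
      = (2 : ℂ) • (A * Cᴴ) + (2 : ℂ) • (B * Dᴴ) := by
  have I_cancel (X Y : Matrix m k ℂ) : (Complex.I • X) * (Complex.I • Y)ᴴ = X * Yᴴ := by
    simp [conjTranspose_smul, smul_smul]
  simp only [I_cancel, conjTranspose_sub, conjTranspose_add, Matrix.sub_mul, Matrix.mul_sub,
    Matrix.add_mul, Matrix.mul_add]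
  module

variable {m k : Type*} [Fintype m] [Fintype k]

lemma trace_mul_conjTranspose_self (X : Matrix m k ℂ) : (X * Xᴴ).trace = frobSqC X := by
  simp [frobSqC, Matrix.trace, Matrix.mul_apply, Complex.mul_conj]

lemma frobSqC_nonneg (X : Matrix m k ℂ) : 0 ≤ frobSqC X :=
  Finset.sum_nonneg fun _ _ => Finset.sum_nonneg fun _ _ => Complex.normSq_nonneg _

lemma frobSqC_eq_zero {X : Matrix m k ℂ} : frobSqC X = 0 ↔ X = 0 := by
  rw [← Matrix.trace_mul_conjTranspose_self_eq_zero_iff, trace_mul_conjTranspose_self,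
    Complex.ofReal_eq_zero]

lemma normSq_trace_le (X : Matrix m m ℂ) :
    Complex.normSq X.trace ≤ Fintype.card m * frobSqC X := by
  have diag_le : ∑ a, ‖X a a‖ ^ 2 ≤ frobSqC X := Finset.sum_le_sum fun a _ => by
    rw [← Complex.normSq_eq_norm_sq]
    exact Finset.single_le_sum (fun b _ => Complex.normSq_nonneg (X a b)) (Finset.mem_univ a)
  calc Complex.normSq X.trace = ‖∑ a, X a a‖ ^ 2 := Complex.normSq_eq_norm_sq _
    _ ≤ (∑ a, ‖X a a‖) ^ 2 := by gcongr; exact norm_sum_le _ _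
    _ ≤ Fintype.card m * ∑ a, ‖X a a‖ ^ 2 := sq_sum_le_card_mul_sum_sq
    _ ≤ Fintype.card m * frobSqC X := by gcongr

lemma re_trace_mul_conjTranspose_comm (X Y : Matrix m k ℂ) :
    (X * Yᴴ).trace.re = (Y * Xᴴ).trace.re := by
  have h : X * Yᴴ = (Y * Xᴴ)ᴴ := by rw [conjTranspose_mul, conjTranspose_conjTranspose]
  rw [h, trace_conjTranspose, Complex.star_def, Complex.conj_re]

lemma frobSqC_sub [DecidableEq m] {Y Z : Matrix m k ℂ} (hY : Y * Yᴴ = 1) (hZ : Z * Zᴴ = 1) :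
    frobSqC (Y - Z) = 2 * (Fintype.card m - (Y * Zᴴ).trace.re) := by
  have h := congrArg Complex.re (trace_mul_conjTranspose_self (Y - Z))
  simp only [conjTranspose_sub, Matrix.sub_mul, Matrix.mul_sub, hY, hZ, trace_sub, trace_one,
    Complex.sub_re, Complex.natCast_re, Complex.ofReal_re,
    re_trace_mul_conjTranspose_comm Z Y] at h
  linarith

lemma sum_single_mul_mul_conjTranspose_single {α : Type*} [Semiring α] [StarRing α]
    [DecidableEq m] [DecidableEq k] (M : Matrix k k α) :
    ∑ e : m × k, single e.1 e.2 (1 : α) * M * (single e.1 e.2 (1 : α))ᴴ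
      = M.trace • (1 : Matrix m m α) := by
  have diagonal_term (a : m) :
      ∑ b : k, single a b (1 : α) * M * (single a b (1 : α))ᴴ = single a a M.trace := by
    ext x y
    simp [Matrix.sum_apply, conjTranspose_single, single_apply, Matrix.trace]
  simp only [Fintype.sum_prod_type, diagonal_term, sum_single_eq_diagonal, smul_one_eq_diagonal]

lemma sum_conjTranspose_single_mul_mul_single {α : Type*} [Semiring α] [StarRing α]
    [DecidableEq m] [DecidableEq k] (M : Matrix m m α) :
    ∑ e : m × k, (single e.1 e.2 (1 : α))ᴴ * M * single e.1 e.2 (1 : α)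
      = M.trace • (1 : Matrix k k α) := by
  rw [← sum_single_mul_mul_conjTranspose_single, ← (Equiv.prodComm k m).sum_comp]
  simp [conjTranspose_single]

end Matrix

section TangentProjection

variable {m k : Type*} [Fintype m] [Fintype k]

/-- The orthogonal projection of `Γ` onto the tangent space `{Ẏ | Ẏ Y* + Y Ẏ* = 0}` at a point `Y`
of the complex Stiefel manifold `Y Y* = I`. -/
noncomputable def tangentProj (Y Γ : Matrix m k ℂ) : Matrix m k ℂ :=
  Γ - (1 / 2 : ℂ) • ((Γ * Yᴴ + Y * Γᴴ) * Y)

/-- The matrix `Q_Y = I - ½ Y* Y`, which carries the part of `tangentProj Y Γ` that is complex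
linear in `Γ`. -/
noncomputable def linearFactor [DecidableEq k] (Y : Matrix m k ℂ) : Matrix k k ℂ :=
  1 - (1 / 2 : ℂ) • (Yᴴ * Y)

/-- The real orthonormal basis of `ℂ^{m×k}` made of the matrix units and their multiples by the
imaginary unit. -/
noncomputable def realBasis [DecidableEq m] [DecidableEq k] : (m × k) ⊕ (m × k) → Matrix m k ℂ :=
  Sum.elim (fun e => single e.1 e.2 1) (fun e => Complex.I • single e.1 e.2 1)

/-- The sum of `P_Y(Γ) P_Z(Γ)*` over the real orthonormal basis `Γ` of `ℂ^{m×k}`, where `P_Y` and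
`P_Z` are the tangent projections at `Y` and `Z`. -/
noncomputable def projGram [DecidableEq m] [DecidableEq k] (Y Z : Matrix m k ℂ) : Matrix m m ℂ :=
  ∑ ν, tangentProj Y (realBasis ν) * (tangentProj Z (realBasis ν))ᴴ

lemma tangentProj_mem_tangent [DecidableEq m] {Y : Matrix m k ℂ} (hY : Y * Yᴴ = 1)
    (Γ : Matrix m k ℂ) :
    tangentProj Y Γ * Yᴴ + Y * (tangentProj Y Γ)ᴴ = 0 := by
  have skew : tangentProj Y Γ * Yᴴ = (1 / 2 : ℂ) • (Γ * Yᴴ - Y * Γᴴ) := by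
    simp only [tangentProj, Matrix.sub_mul, Matrix.smul_mul, Matrix.mul_assoc, hY, Matrix.mul_one]
    module
  have adjoint : Y * (tangentProj Y Γ)ᴴ = (tangentProj Y Γ * Yᴴ)ᴴ := by
    rw [conjTranspose_mul, conjTranspose_conjTranspose]
  rw [adjoint, skew]
  simp [conjTranspose_smul, ← smul_add]

variable [DecidableEq k]

lemma tangentProj_eq_sub (Y Γ : Matrix m k ℂ) :
    tangentProj Y Γ = Γ * linearFactor Y - (1 / 2 : ℂ) • (Y * Γᴴ * Y) := by
  simp only [tangentProj, linearFactor, Matrix.mul_sub, Matrix.mul_one, Matrix.mul_smul,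
    Matrix.add_mul, Matrix.mul_assoc]
  module

lemma tangentProj_I_smul (Y Γ : Matrix m k ℂ) :
    tangentProj Y (Complex.I • Γ)
      = Complex.I • (Γ * linearFactor Y + (1 / 2 : ℂ) • (Y * Γᴴ * Y)) := by
  simp only [tangentProj_eq_sub, conjTranspose_smul, Complex.star_def, Complex.conj_I,
    Matrix.smul_mul, Matrix.mul_smul]
  module

lemma tangentProj_mul_conjTranspose_add_I_smul (Y Z Γ : Matrix m k ℂ) :
    tangentProj Y Γ * (tangentProj Z Γ)ᴴ
        + tangentProj Y (Complex.I • Γ) * (tangentProj Z (Complex.I • Γ))ᴴ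
      = (2 : ℂ) • (Γ * (linearFactor Y * (linearFactor Z)ᴴ) * Γᴴ)
        + (1 / 2 : ℂ) • (Y * (Γᴴ * (Y * Zᴴ) * Γ) * Zᴴ) := by
  rw [tangentProj_I_smul, tangentProj_I_smul, tangentProj_eq_sub, tangentProj_eq_sub,
    sub_mul_conjTranspose_sub_add_I_smul]
  simp only [conjTranspose_smul, conjTranspose_mul, conjTranspose_conjTranspose, Matrix.smul_mul,
    Matrix.mul_smul, smul_smul, Matrix.mul_assoc]
  norm_num

lemma trace_linearFactor_mul [DecidableEq m] {Y Z : Matrix m k ℂ} (hY : Y * Yᴴ = 1)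
    (hZ : Z * Zᴴ = 1) :
    (linearFactor Y * (linearFactor Z)ᴴ).trace
      = Fintype.card k - Fintype.card m + frobSqC (Y * Zᴴ) / 4 := by
  have trY : (Yᴴ * Y).trace = Fintype.card m := by rw [trace_mul_comm, hY, trace_one]
  have trZ : (Zᴴ * Z).trace = Fintype.card m := by rw [trace_mul_comm, hZ, trace_one]
  have trYZ : (Yᴴ * Y * (Zᴴ * Z)).trace = frobSqC (Y * Zᴴ) := by
    rw [← trace_mul_conjTranspose_self, Matrix.mul_assoc, trace_mul_comm]
    simp only [conjTranspose_mul, conjTranspose_conjTranspose, Matrix.mul_assoc]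
  have star_half : star (1 / 2 : ℂ) = 1 / 2 := by simp
  simp only [linearFactor, conjTranspose_sub, conjTranspose_one, conjTranspose_smul,
    conjTranspose_mul, conjTranspose_conjTranspose, star_half, Matrix.sub_mul, Matrix.mul_sub,
    Matrix.one_mul, Matrix.mul_one, Matrix.smul_mul, Matrix.mul_smul, trace_sub, trace_smul, trY,
    trZ, trYZ, trace_one, smul_eq_mul]
  ring

variable [DecidableEq m]

lemma projGram_eq (Y Z : Matrix m k ℂ) :
    projGram Y Z = (2 * (linearFactor Y * (linearFactor Z)ᴴ).trace) • (1 : Matrix m m ℂ)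
      + ((Y * Zᴴ).trace / 2) • (Y * Zᴴ) := by
  simp only [projGram, Fintype.sum_sum_type, realBasis, Sum.elim_inl, Sum.elim_inr,
    ← Finset.sum_add_distrib, tangentProj_mul_conjTranspose_add_I_smul]
  simp only [Finset.sum_add_distrib, ← Finset.smul_sum, ← Matrix.sum_mul, ← Matrix.mul_sum,
    sum_single_mul_mul_conjTranspose_single, sum_conjTranspose_single_mul_mul_single,
    Matrix.mul_smul, Matrix.smul_mul, Matrix.mul_one, smul_smul]
  ring_nf

lemma projGram_self {Y : Matrix m k ℂ} (hY : Y * Yᴴ = 1) :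
    projGram Y Y = (2 * Fintype.card k - Fintype.card m : ℂ) • (1 : Matrix m m ℂ) := by
  have frob_one : (frobSqC (1 : Matrix m m ℂ) : ℂ) = Fintype.card m := by
    rw [← trace_mul_conjTranspose_self, conjTranspose_one, Matrix.mul_one, trace_one]
  rw [projGram_eq, trace_linearFactor_mul hY hY, hY, frob_one, trace_one, ← add_smul]
  ring_nf

lemma le_re_trace_projGram {Y Z : Matrix m k ℂ} (hY : Y * Yᴴ = 1) (hZ : Z * Zᴴ = 1) :
    2 * Fintype.card m * (Fintype.card k - Fintype.card m) + (Y * Zᴴ).trace.re ^ 2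
      ≤ (projGram Y Z).trace.re := by
  have trace_eq : (projGram Y Z).trace.re
      = 2 * Fintype.card m * (Fintype.card k - Fintype.card m)
        + Fintype.card m * frobSqC (Y * Zᴴ) / 2
        + ((Y * Zᴴ).trace.re ^ 2 - (Y * Zᴴ).trace.im ^ 2) / 2 := by
    rw [projGram_eq, trace_linearFactor_mul hY hZ]
    simp [pow_two]
    ring
  have cauchy_schwarz := normSq_trace_le (Y * Zᴴ)
  rw [Complex.normSq_apply] at cauchy_schwarz
  linarith

lemma re_trace_projGram_self_sub_le {Y Z : Matrix m k ℂ} (hY : Y * Yᴴ = 1) (hZ : Z * Zᴴ = 1) :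
    (projGram Y Y).trace.re - (projGram Z Y).trace.re
      ≤ Fintype.card m * frobSqC (Y - Z) - frobSqC (Y - Z) ^ 2 / 4 := by
  have trace_self : (projGram Y Y).trace.re
      = (2 * Fintype.card k - Fintype.card m) * Fintype.card m := by
    simp [projGram_self hY]
  have lower := le_re_trace_projGram hZ hY
  rw [trace_self, frobSqC_sub hY hZ, re_trace_mul_conjTranspose_comm]
  linarith

end TangentProjection

section Blocks

variable {n r p : ℕ}

/-- The matrix with row-blocks `X 0, …, X (n - 1)`; a right inverse of `blk`. -/
def stack {α : Type*} (X : Fin n → Matrix (Fin r) (Fin p) α) :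
    Matrix (Fin n × Fin r) (Fin p) α :=
  Matrix.of fun q b => X q.1 q.2 b

lemma blk_stack {α : Type*} (X : Fin n → Matrix (Fin r) (Fin p) α) (i : Fin n) :
    blk (stack X) i = X i := rfl

lemma trace_mul_mul_conjTranspose_eq_sum_blk {α : Type*} [NonUnitalSemiring α] [Star α]
    (S : Matrix (Fin n × Fin r) (Fin n × Fin r) α) (D : Matrix (Fin n × Fin r) (Fin p) α) :
    (S * D * Dᴴ).trace
      = ∑ i, ∑ j, (S.submatrix (Prod.mk i) (Prod.mk j) * (blk D j * (blk D i)ᴴ)).trace := by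
  rw [Matrix.mul_assoc]
  simp only [Matrix.trace, Matrix.diag_apply, Matrix.mul_apply (M := S), Fintype.sum_prod_type]
  refine Finset.sum_congr rfl fun i _ => ?_
  rw [Finset.sum_comm]
  rfl

lemma submatrix_kronecker_one {α : Type*} [MulZeroOneClass α] (A : Matrix (Fin n) (Fin n) α)
    (i j : Fin n) :
    (A ⊗ₖ (1 : Matrix (Fin r) (Fin r) α)).submatrix (Prod.mk i) (Prod.mk j) = A i j • 1 := rfl

lemma submatrix_SBDC (M : Matrix (Fin n × Fin r) (Fin n × Fin r) ℂ) (i j : Fin n) :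
    (SBDC M).submatrix (Prod.mk i) (Prod.mk j)
      = if i = j then (1 / 2 : ℂ) • (M.submatrix (Prod.mk i) (Prod.mk i)
          + (M.submatrix (Prod.mk i) (Prod.mk i))ᴴ) else 0 := by
  ext a b
  split_ifs with hij
  · subst hij
    simp [SBDC, div_eq_inv_mul]
  · simp [SBDC, hij]

lemma re_sum_trace_SBDC_mul (M : Matrix (Fin n × Fin r) (Fin n × Fin r) ℂ) {c : ℝ}
    {W : Fin n → Fin n → Matrix (Fin r) (Fin r) ℂ} (hW : ∀ i, W i i = (c : ℂ) • 1) :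
    (∑ i, ∑ j, ((SBDC M).submatrix (Prod.mk i) (Prod.mk j) * W i j).trace).re
      = c * M.trace.re := by
  have block (i j : Fin n) :
      ((SBDC M).submatrix (Prod.mk i) (Prod.mk j) * W i j).trace.re
        = if i = j then c * (M.submatrix (Prod.mk i) (Prod.mk i)).trace.re else 0 := by
    rw [submatrix_SBDC]
    split_ifs with hij
    · subst hij
      rw [hW, Matrix.mul_smul, Matrix.mul_one]
      simp only [trace_smul, trace_add, trace_conjTranspose, Complex.star_def, Complex.add_conj,
        smul_eq_mul, Complex.re_ofReal_mul]
      simp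
    · simp
  simp only [Complex.re_sum, block, Finset.sum_ite_eq, Finset.mem_univ, if_true,
    ← Finset.mul_sum]
  simp [Matrix.trace, Fintype.sum_prod_type]

lemma re_trace_kronecker_one_mul_mul_conjTranspose (L : Matrix (Fin n) (Fin n) ℝ)
    (Y : Matrix (Fin n × Fin r) (Fin p) ℂ) :
    (L.map Complex.ofReal ⊗ₖ (1 : Matrix (Fin r) (Fin r) ℂ) * Y * Yᴴ).trace.re
      = ∑ i, ∑ j, L i j * (blk Y i * (blk Y j)ᴴ).trace.re := by
  simp only [trace_mul_mul_conjTranspose_eq_sum_blk, submatrix_kronecker_one, Matrix.smul_mul,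
    Matrix.one_mul, trace_smul, smul_eq_mul, Matrix.map_apply, Complex.re_sum,
    Complex.re_ofReal_mul]
  refine Finset.sum_congr rfl fun i _ => Finset.sum_congr rfl fun j _ => ?_
  rw [re_trace_mul_conjTranspose_comm]

lemma re_sum_trace_SmatC_mul (L : Matrix (Fin n) (Fin n) ℝ)
    (Y : Matrix (Fin n × Fin r) (Fin p) ℂ) {c : ℝ}
    {W : Fin n → Fin n → Matrix (Fin r) (Fin r) ℂ} (hW : ∀ i, W i i = (c : ℂ) • 1) :
    (∑ i, ∑ j, ((SmatC (L.map Complex.ofReal ⊗ₖ (1 : Matrix (Fin r) (Fin r) ℂ)) Y).submatrix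
        (Prod.mk i) (Prod.mk j) * W i j).trace).re
      = ∑ i, ∑ j, L i j * (W i j).trace.re
        - c * ∑ i, ∑ j, L i j * (blk Y i * (blk Y j)ᴴ).trace.re := by
  rw [← re_trace_kronecker_one_mul_mul_conjTranspose, ← re_sum_trace_SBDC_mul _ hW]
  simp only [SmatC, submatrix_sub, Pi.sub_apply, Matrix.sub_mul, trace_sub,
    submatrix_kronecker_one, Matrix.smul_mul, Matrix.one_mul, trace_smul, smul_eq_mul,
    Matrix.map_apply, Finset.sum_sub_distrib, Complex.sub_re, Complex.re_sum,
    Complex.re_ofReal_mul]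

lemma re_sum_trace_mul_projGram_nonneg {S : Matrix (Fin n × Fin r) (Fin n × Fin r) ℂ}
    {Y : Matrix (Fin n × Fin r) (Fin p) ℂ} (hY : FeasibleC Y)
    (hS : ∀ Ydot : Matrix (Fin n × Fin r) (Fin p) ℂ,
      (∀ i, blk Ydot i * (blk Y i)ᴴ + blk Y i * (blk Ydot i)ᴴ = 0) →
      0 ≤ ((S * Ydot * Ydotᴴ).trace).re) :
    0 ≤ (∑ i, ∑ j, (S.submatrix (Prod.mk i) (Prod.mk j)
      * projGram (blk Y j) (blk Y i)).trace).re := by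
  let D (ν : (Fin r × Fin p) ⊕ (Fin r × Fin p)) : Matrix (Fin n × Fin r) (Fin p) ℂ :=
    stack fun i => tangentProj (blk Y i) (realBasis ν)
  have sum_eq : ∑ i, ∑ j, (S.submatrix (Prod.mk i) (Prod.mk j)
      * projGram (blk Y j) (blk Y i)).trace = ∑ ν, (S * D ν * (D ν)ᴴ).trace := by
    simp only [D, projGram, trace_mul_mul_conjTranspose_eq_sum_blk, blk_stack, Matrix.mul_sum,
      trace_sum]
    exact (Finset.sum_congr rfl fun i _ => Finset.sum_comm).trans Finset.sum_comm
  rw [sum_eq, Complex.re_sum]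
  exact Finset.sum_nonneg fun ν _ => hS (D ν) fun i => tangentProj_mem_tangent (hY i) _

end Blocks

section Graph

variable {V : Type*} (G : SimpleGraph V) [DecidableRel G.Adj]

lemma adjMatrix_nonneg {R : Type*} [Zero R] [One R] [Preorder R] [ZeroLEOneClass R] (i j : V) :
    0 ≤ G.adjMatrix R i j := by
  rw [SimpleGraph.adjMatrix_apply]
  split_ifs
  exacts [zero_le_one, le_rfl]

variable [Fintype V]

lemma map_lapMatrix [DecidableEq V] {R S : Type*} [Ring R] [Ring S] (f : R →+* S) :
    (G.lapMatrix R).map f = G.lapMatrix S := by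
  ext i j
  simp [SimpleGraph.lapMatrix, SimpleGraph.degMatrix, Matrix.diagonal_apply, apply_ite f]

lemma sum_lapMatrix_mul [DecidableEq V] {R : Type*} [Ring R] (f : V → V → R) :
    ∑ i, ∑ j, G.lapMatrix R i j * f i j = ∑ i, ∑ j, G.adjMatrix R i j * (f i i - f i j) := by
  refine Finset.sum_congr rfl fun i _ => ?_
  simp only [SimpleGraph.lapMatrix, SimpleGraph.degMatrix, Matrix.sub_apply,
    Matrix.diagonal_apply, sub_mul, mul_sub, ite_mul, zero_mul, Finset.sum_sub_distrib,
    Finset.sum_ite_eq, Finset.mem_univ, if_true, G.degree_eq_sum_if_adj, Finset.sum_mul,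
    SimpleGraph.adjMatrix_apply]

variable {G}

lemma eq_of_sum_adjMatrix_mul_frobSqC_sub_nonpos {m k : Type*} [Fintype m] [Fintype k]
    {X : V → Matrix m k ℂ} (hG : G.Preconnected)
    (hX : ∑ i, ∑ j, G.adjMatrix ℝ i j * frobSqC (X i - X j) ^ 2 ≤ 0) (i j : V) : X i = X j := by
  have nonneg (i j : V) : 0 ≤ G.adjMatrix ℝ i j * frobSqC (X i - X j) ^ 2 :=
    mul_nonneg (adjMatrix_nonneg G i j) (sq_nonneg _)
  have adj_eq {i j : V} (hij : G.Adj i j) : X i = X j := by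
    have term_le := calc
      G.adjMatrix ℝ i j * frobSqC (X i - X j) ^ 2
        ≤ ∑ j, G.adjMatrix ℝ i j * frobSqC (X i - X j) ^ 2 :=
          Finset.single_le_sum (fun j _ => nonneg i j) (Finset.mem_univ j)
      _ ≤ ∑ i, ∑ j, G.adjMatrix ℝ i j * frobSqC (X i - X j) ^ 2 :=
          Finset.single_le_sum (f := fun i => ∑ j, G.adjMatrix ℝ i j * frobSqC (X i - X j) ^ 2)
            (fun i _ => Finset.sum_nonneg fun j _ => nonneg i j) (Finset.mem_univ i)
      _ ≤ 0 := hX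
    rw [SimpleGraph.adjMatrix_apply, if_pos hij, one_mul] at term_le
    exact sub_eq_zero.1 (frobSqC_eq_zero.1 (sq_nonpos_iff _ |>.1 term_le))
  obtain ⟨walk⟩ := hG i j
  induction walk with
  | nil => rfl
  | cons hadj _ ih => exact (adj_eq hadj).trans ih

end Graph

section Synchronization

variable {n r p : ℕ} {G : SimpleGraph (Fin n)} [DecidableRel G.Adj]
  {Y : Matrix (Fin n × Fin r) (Fin p) ℂ}

lemma sum_lapMatrix_mul_re_trace (hY : FeasibleC Y) :
    ∑ i, ∑ j, G.lapMatrix ℝ i j * (blk Y i * (blk Y j)ᴴ).trace.re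
      = (∑ i, ∑ j, G.adjMatrix ℝ i j * frobSqC (blk Y i - blk Y j)) / 2 := by
  simp only [sum_lapMatrix_mul, Finset.sum_div]
  refine Finset.sum_congr rfl fun i _ => Finset.sum_congr rfl fun j _ => ?_
  rw [frobSqC_sub (hY i) (hY j), hY i, trace_one, Complex.natCast_re]
  ring

lemma sum_lapMatrix_mul_re_trace_nonneg (hY : FeasibleC Y) :
    0 ≤ ∑ i, ∑ j, G.lapMatrix ℝ i j * (blk Y i * (blk Y j)ᴴ).trace.re := by
  rw [sum_lapMatrix_mul_re_trace hY]
  exact div_nonneg (Finset.sum_nonneg fun i _ => Finset.sum_nonneg fun j _ =>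
    mul_nonneg (adjMatrix_nonneg G i j) (frobSqC_nonneg _)) zero_le_two

lemma sum_lapMatrix_mul_re_trace_projGram_le (hY : FeasibleC Y) :
    ∑ i, ∑ j, G.lapMatrix ℝ i j * (projGram (blk Y j) (blk Y i)).trace.re
      ≤ r * (∑ i, ∑ j, G.adjMatrix ℝ i j * frobSqC (blk Y i - blk Y j))
        - (∑ i, ∑ j, G.adjMatrix ℝ i j * frobSqC (blk Y i - blk Y j) ^ 2) / 4 := by
  simp only [sum_lapMatrix_mul, Finset.mul_sum, Finset.sum_div, ← Finset.sum_sub_distrib]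
  refine Finset.sum_le_sum fun i _ => Finset.sum_le_sum fun j _ => ?_
  have edge := mul_le_mul_of_nonneg_left (re_trace_projGram_self_sub_le (hY i) (hY j))
    (adjMatrix_nonneg G i j)
  rw [Fintype.card_fin] at edge
  linarith

lemma le_sum_lapMatrix_mul_re_trace_projGram (hY : FeasibleC Y)
    (hS : ∀ Ydot : Matrix (Fin n × Fin r) (Fin p) ℂ,
      (∀ i, blk Ydot i * (blk Y i)ᴴ + blk Y i * (blk Ydot i)ᴴ = 0) →
      0 ≤ ((SmatC (G.lapMatrix ℂ ⊗ₖ (1 : Matrix (Fin r) (Fin r) ℂ)) Y * Ydot * Ydotᴴ).trace).re) :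
    (2 * p - r) * ∑ i, ∑ j, G.lapMatrix ℝ i j * (blk Y i * (blk Y j)ᴴ).trace.re
      ≤ ∑ i, ∑ j, G.lapMatrix ℝ i j * (projGram (blk Y j) (blk Y i)).trace.re := by
  have nonneg := re_sum_trace_mul_projGram_nonneg hY hS
  have gram_self (i : Fin n) :
      projGram (blk Y i) (blk Y i) = ((2 * p - r : ℝ) : ℂ) • 1 := by
    simp [projGram_self (hY i)]
  rw [← map_lapMatrix G Complex.ofRealHom] at nonneg
  exact sub_nonneg.1 (nonneg.trans_eq (re_sum_trace_SmatC_mul _ Y gram_self))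

theorem complex_second_order_inequality_general
    (Lhat : Matrix (Fin n × Fin r) (Fin n × Fin r) ℂ)
    (hLhat : Lhat = (G.lapMatrix ℂ) ⊗ₖ (1 : Matrix (Fin r) (Fin r) ℂ))
    (hY : FeasibleC Y)
    (hS : ∀ Ydot : Matrix (Fin n × Fin r) (Fin p) ℂ,
      (∀ i, blk Ydot i * (blk Y i)ᴴ + blk Y i * (blk Ydot i)ᴴ = 0) →
      0 ≤ ((SmatC Lhat Y * Ydot * Ydotᴴ).trace).re) :
    ((4 * (p : ℝ) - 6 * r) *
        (∑ i, ∑ j, G.lapMatrix ℝ i j * ((blk Y i * (blk Y j)ᴴ).trace).re)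
      + (1 / 2) *
        (∑ i, ∑ j, G.adjMatrix ℝ i j * (frobSqC (blk Y i - blk Y j)) ^ 2) ≤ 0) ∧
    (G.Connected → 3 * r ≤ 2 * p → ∀ i j, blk Y i = blk Y j) := by
  subst hLhat
  have laplacian_eq := sum_lapMatrix_mul_re_trace (G := G) hY
  have averaged := le_sum_lapMatrix_mul_re_trace_projGram hY hS
  have edgewise := sum_lapMatrix_mul_re_trace_projGram_le (G := G) hY
  have inequality : (4 * (p : ℝ) - 6 * r) *
        (∑ i, ∑ j, G.lapMatrix ℝ i j * ((blk Y i * (blk Y j)ᴴ).trace).re)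
      + (1 / 2) *
        (∑ i, ∑ j, G.adjMatrix ℝ i j * (frobSqC (blk Y i - blk Y j)) ^ 2) ≤ 0 := by
    linear_combination 2 * averaged + 2 * edgewise - 4 * r * laplacian_eq
  refine ⟨inequality, fun hG hrp =>
    eq_of_sum_adjMatrix_mul_frobSqC_sub_nonpos hG.preconnected ?_⟩
  have coeff_nonneg : (0 : ℝ) ≤ 4 * p - 6 * r := by
    have : (3 * r : ℝ) ≤ 2 * p := mod_cast hrp
    linarith
  linarith [mul_nonneg coeff_nonneg (sum_lapMatrix_mul_re_trace_nonneg (G := G) hY)]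

end Synchronization

/-- **Key second-order inequality, complex noiseless case.**  If the cost matrix is
`L̂ = L ⊗ I_r` (all `Z_i = I_r`, no noise), then every second-order critical point `Y` of the
complex rank-`p` problem satisfies
`(4p − 6r) Σ_{ij} L_ij Re tr(Y_i Y_j*) + (1/2) Σ_{ij} A_ij ‖Y_i − Y_j‖_F⁴ ≤ 0`;
in particular, if `G` is connected and `2p ≥ 3r`, then `Y_1 = ⋯ = Y_n`. -/
theorem complex_second_order_inequality
    (n r p : ℕ) (hn : 1 ≤ n) (hr : 1 ≤ r) (hrp : r ≤ p)
    (G : SimpleGraph (Fin n)) [DecidableRel G.Adj]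
    (Lhat : Matrix (Fin n × Fin r) (Fin n × Fin r) ℂ)
    (hLhat : Lhat = (G.lapMatrix ℂ) ⊗ₖ (1 : Matrix (Fin r) (Fin r) ℂ))
    (Y : Matrix (Fin n × Fin r) (Fin p) ℂ)
    (hY : IsSecondOrderCriticalC Lhat Y) :
    ((4 * (p : ℝ) - 6 * r) *
        (∑ i, ∑ j, G.lapMatrix ℝ i j * ((blk Y i * (blk Y j)ᴴ).trace).re)
      + (1 / 2) *
        (∑ i, ∑ j, G.adjMatrix ℝ i j * (frobSqC (blk Y i - blk Y j)) ^ 2) ≤ 0) ∧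
    (G.Connected → 3 * r ≤ 2 * p → ∀ i j, blk Y i = blk Y j) :=
  complex_second_order_inequality_general Lhat hLhat hY.1 hY.2.2

end SyncPaper
end
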